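/- arXiv:2503.17387 — 4 statements merged into one kernel-verified Lean document; each statement's English description precedes it below -/
import Mathlib

section
/- Every deterministic graphical game that is terminal and has at most 3 terminals has a Nash equilibrium (in pure stationary strategies). -/
/-!
The theorem is deduced from a statement about *labelled games*: some positions carry a label from a
set `L` of at most three labels (play stops there), the others have moves, and every player `i`
ranks the labels by an injective `r i : L → ℕ`. Infinite play is worst for everybody. If a labelled
position is reachable from the initial one, there is an equilibrium whose outcome is a label
(`exists_labelledNE`); if no terminal is reachable, every situation is trivially an equilibrium.

The proof is by induction on the number of moves. Two reductions shrink the game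
(an *exit* is a move to a labelled position):

* if `u` has an exit to a label that its owner likes at least as well as everything reachable from
  `u`, then `u` may itself be given that label (`labelledNE_of_best`);
* if `u` has an exit to a label that is worst for its owner among all labels reachable from the
  initial position, and `u` has another move, the exit may be deleted (`labelledNE_of_worst`).

In an irreducible game every exit is strictly between two other labels for its owner, so there are
exactly three labels, every exit is the second best for its owner, and every unlabelled position
has an unlabelled successor. For a label `t` let `N t` be the positions of the players for whom `t`
is worst, and `W t` the set from which the coalition `N t` can force a label other than `t`. Let
`D t` be the set of positions from which label `t` is reachable by a path avoiding `W t`.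

If the initial position is in `D t`, there is an equilibrium with outcome `t`
(`labelledNE_of_mem`): follow such a path, let all other positions outside `W t` move to positions
outside `W t`, and let no position of `W t` use an exit. A deviating player who ranks `t` last can
never enter `W t`, hence gets `t` at best. Any other player gets `t` or a label he reaches by one of
his own exits, his second best, which is no better than `t` as `t` is not his worst label.

Finally every position from which some label is reachable lies in some `D t`
(`labelledNE_of_irreducible`). The three sets `W a`, `W b`, `W c` have no common point, since the three coalitions together would force a label outside
`{a, b, c}`. Hence `W a ∩ W b ⊆ D c`: both coalitions together force label `c` inside `W a ∩ W b`.
Following the forcing strategy of `N a` from a point of `W a` then gives `W a ⊆ D b ∪ D c`, and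
induction along a path to a label finishes the argument.
-/

open Classical

/-- A deterministic graphical (DG) game on vertex (position) set `V` with player set `ι`.
`adj` is the move relation of the digraph; terminals are exactly the vertices of
out-degree `0`.  `owner x` is the player controlling position `x` (irrelevant for
terminals), `init` is the initial position, and `pref i x y` means that player `i`
strictly prefers outcome `x` to outcome `y`, where outcomes are encoded as
`Option V`: `some t` for a terminal `t` and `none` for the infinite outcome `∞`. -/
structure DGGame (V : Type*) (ι : Type*) where
  adj : V → V → Prop
  owner : V → ι
  init : V
  pref : ι → Option V → Option V → Prop

namespace DGGame

variable {V ι : Type*} (Γ : DGGame V ι)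

/-- A terminal position: no outgoing moves. -/
def Terminal (x : V) : Prop := ∀ y, ¬ Γ.adj x y

/-- The set of outcomes `A = T ∪ {∞}`. -/
def OutcomeSet : Set (Option V) := {x | x = none ∨ ∃ t, Γ.Terminal t ∧ x = some t}

/-- The preferences of each player form a strict linear order on the outcome set. -/
def PrefOrder : Prop :=
  ∀ i : ι,
    (∀ x ∈ Γ.OutcomeSet, ¬ Γ.pref i x x) ∧
    (∀ x ∈ Γ.OutcomeSet, ∀ y ∈ Γ.OutcomeSet, ∀ z ∈ Γ.OutcomeSet,
        Γ.pref i x y → Γ.pref i y z → Γ.pref i x z) ∧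
    (∀ x ∈ Γ.OutcomeSet, ∀ y ∈ Γ.OutcomeSet, x ≠ y → Γ.pref i x y ∨ Γ.pref i y x)

/-- One step of the play determined by a situation `σ` (stays put at terminals). -/
noncomputable def step (σ : V → V) (x : V) : V :=
  if Γ.Terminal x then x else σ x

/-- The position reached after `n` moves of the play starting at the initial position. -/
noncomputable def iter (σ : V → V) (n : ℕ) : V := (Γ.step σ)^[n] Γ.init

/-- The outcome `g(σ)` of a situation: the terminal at which the play from the initial
position ends, or `none` (i.e. `∞`) if the play is infinite. -/
noncomputable def outcome (σ : V → V) : Option V :=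
  if h : ∃ n, Γ.Terminal (Γ.iter σ n) then some (Γ.iter σ (Nat.find h)) else none

/-- A situation: a choice, for every non-terminal position, of a move from it.
(Values at terminal positions are irrelevant.) -/
def IsSituation (σ : V → V) : Prop := ∀ x, ¬ Γ.Terminal x → Γ.adj x (σ x)

/-- Nash equilibrium in pure stationary strategies: no player `i` can obtain a strictly
better outcome by changing his own moves only. -/
def IsNE (σ : V → V) : Prop :=
  Γ.IsSituation σ ∧
  ∀ (i : ι) (σ' : V → V), Γ.IsSituation σ' →
    (∀ x, Γ.owner x ≠ i → σ' x = σ x) →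
    ¬ Γ.pref i (Γ.outcome σ') (Γ.outcome σ)

/-- A terminal Nash equilibrium: a NE whose outcome is a terminal. -/
def IsTerminalNE (σ : V → V) : Prop := Γ.IsNE σ ∧ ∃ t, Γ.outcome σ = some t

/-- A non-terminal Nash equilibrium: a NE whose outcome is `∞`. -/
def IsNonterminalNE (σ : V → V) : Prop := Γ.IsNE σ ∧ Γ.outcome σ = none

/-- A terminal DG game: every player prefers every terminal outcome to `∞`. -/
def TerminalGame : Prop := ∀ (i : ι) (t : V), Γ.Terminal t → Γ.pref i (some t) none

/-- A play-once DG game: every player controls exactly one position. -/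
def PlayOnce : Prop := ∀ i : ι, {x | ¬ Γ.Terminal x ∧ Γ.owner x = i}.ncard = 1

/-- Reachability by a directed path. -/
def Reaches (x y : V) : Prop := Relation.ReflTransGen Γ.adj x y

end DGGame

namespace DGGame

/-! ### Attractors -/

/-- Least fixed points with a rank: for a monotone one-step rule `P` on a finite type there is a
set closed under `P` each of whose elements is produced from elements of smaller rank. -/
theorem exists_attractor {V : Type*} [Finite V] (P : Set V → V → Prop)
    (hP : ∀ S S' x, S ⊆ S' → P S x → P S' x) :
    ∃ (X : Set V) (ρ : V → ℕ), (∀ x ∈ X, P {y | y ∈ X ∧ ρ y < ρ x} x) ∧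
      ∀ x, P X x → x ∈ X := by
  obtain ⟨X, hX⟩ := (Set.toFinite {X : Set V | ∃ ρ : V → ℕ,
    ∀ x ∈ X, P {y | y ∈ X ∧ ρ y < ρ x} x}).exists_maximal ⟨∅, fun _ => 0, by simp⟩
  obtain ⟨⟨ρ, hρ⟩, hmax⟩ := hX
  refine ⟨X, ρ, hρ, fun x hx => ?_⟩
  by_contra hxX
  obtain ⟨M, hM⟩ := (Set.finite_range ρ).bddAbove
  have hM' : ∀ y, ρ y ≤ M := fun y => hM ⟨y, rfl⟩
  refine hxX (hmax (y := insert x X) ⟨fun y => if y ∈ X then ρ y else M + 1, ?_⟩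
    (Set.subset_insert _ _) (Set.mem_insert _ _))
  intro y hy
  rcases hy with rfl | hy
  · refine hP _ _ _ ?_ hx
    intro z hz
    have := hM' z
    simp only [Set.mem_ofPred_eq, hz, hxX, if_true, if_false]
    exact ⟨Or.inr hz, by omega⟩
  · refine hP _ _ _ ?_ (hρ y hy)
    rintro z ⟨hz, hlt⟩
    simp only [Set.mem_ofPred_eq, hz, hy, if_true]
    exact ⟨Or.inr hz, hlt⟩

/-! ### Labelled games -/

section Labelled

variable {V ι L : Type*}

/-- The play of `σ` from a position stops at a position with the given label. -/
inductive Ends (lab : V → Option L) (σ : V → V) : V → L → Prop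
  | term {x t} : lab x = some t → Ends lab σ x t
  | step {x t} : lab x = none → Ends lab σ (σ x) t → Ends lab σ x t

/-- Some path of moves leads from a position to a position with the given label. -/
inductive Rch (lab : V → Option L) (E : V → V → Prop) : V → L → Prop
  | term {x t} : lab x = some t → Rch lab E x t
  | step {x y t} : lab x = none → E x y → Rch lab E y t → Rch lab E x t

/-- Player `i` can steer the play to the given label while all others follow `σ`. The moves of `i`
need not be stationary, so that this covers all unilateral deviations. -/
inductive CanReach (lab : V → Option L) (E : V → V → Prop) (owner : V → ι) (i : ι) (σ : V → V) :
    V → L → Prop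
  | term {x t} : lab x = some t → CanReach lab E owner i σ x t
  | own {x y t} : lab x = none → owner x = i → E x y → CanReach lab E owner i σ y t →
      CanReach lab E owner i σ x t
  | other {x t} : lab x = none → owner x ≠ i → CanReach lab E owner i σ (σ x) t →
      CanReach lab E owner i σ x t

/-- Existence of an equilibrium from `x₀` whose outcome is a label. -/
def LabelledNE (lab : V → Option L) (E : V → V → Prop) (owner : V → ι) (r : ι → L → ℕ)
    (x₀ : V) : Prop :=
  ∃ (σ : V → V) (t : L), (∀ x, lab x = none → E x (σ x)) ∧ Ends lab σ x₀ t ∧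
    ∀ i s, CanReach lab E owner i σ x₀ s → r i s ≤ r i t

variable {lab : V → Option L} {E : V → V → Prop} {owner : V → ι} {r : ι → L → ℕ} {x₀ : V}

theorem CanReach.rch {σ : V → V} (hσ : ∀ x, lab x = none → E x (σ x)) {i : ι} {x : V} {t : L}
    (h : CanReach lab E owner i σ x t) : Rch lab E x t := by
  induction h with
  | term h => exact .term h
  | own h _ hE _ ih => exact .step h hE ih
  | other h _ _ ih => exact .step h (hσ _ h) ih

theorem Ends.rch {σ : V → V} (hσ : ∀ x, lab x = none → E x (σ x)) {x : V} {t : L}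
    (h : Ends lab σ x t) : Rch lab E x t := by
  induction h with
  | term h => exact .term h
  | step h _ ih => exact .step h (hσ _ h) ih

/-- A reachable label is the outcome of some situation: let every position from which label `t` is
reachable move to a position of smaller attractor rank. -/
theorem exists_ends [Finite V] (hE : ∀ x, lab x = none → ∃ y, E x y) {t : L}
    (h : Rch lab E x₀ t) :
    ∃ σ : V → V, (∀ x, lab x = none → E x (σ x)) ∧ Ends lab σ x₀ t := by
  obtain ⟨X, ρ, hX, hcl⟩ := exists_attractor
    (fun (S : Set V) x => lab x = some t ∨ lab x = none ∧ ∃ y ∈ S, E x y) (by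
      rintro S S' x hS (h | ⟨h, y, hy, hxy⟩)
      · exact .inl h
      · exact .inr ⟨h, y, hS hy, hxy⟩)
  have hx₀ : x₀ ∈ X := by
    clear hX
    induction h with
    | term h => exact hcl _ (.inl h)
    | step h hE' _ ih => exact hcl _ (.inr ⟨h, _, ih hcl, hE'⟩)
  have key : ∀ x, ∃ y, lab x = none → E x y ∧ (x ∈ X → y ∈ X ∧ ρ y < ρ x) := by
    intro x
    by_cases hx : lab x = none
    · by_cases hxX : x ∈ X
      · rcases hX x hxX with h' | ⟨-, y, hy, hxy⟩
        · simp [hx] at h'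
        · exact ⟨y, fun _ => ⟨hxy, fun _ => hy⟩⟩
      · obtain ⟨y, hy⟩ := hE x hx
        exact ⟨y, fun _ => ⟨hy, fun h => absurd h hxX⟩⟩
    · exact ⟨x, fun h => absurd h hx⟩
  choose σ hσ using key
  refine ⟨σ, fun x hx => (hσ x hx).1, ?_⟩
  suffices H : ∀ n x, x ∈ X → ρ x = n → Ends lab σ x t from H _ _ hx₀ rfl
  intro n
  induction n using Nat.strong_induction_on with
  | _ n ih =>
    intro x hx hn
    rcases hX x hx with h' | ⟨h', -⟩
    · exact .term h'
    · obtain ⟨h1, h2⟩ := (hσ x h').2 hx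
      exact .step h' (ih _ (hn ▸ h2) _ h1 rfl)

/-! ### The two reductions -/

/-- If `u` has an exit to label `t`, and its owner likes no label reachable from `u` better than
`t`, then an equilibrium of the game with `u` labelled `t` gives one of the original game. -/
theorem labelledNE_of_best {u w : V} {t : L} (hu : lab u = none) (huw : E u w)
    (hw : lab w = some t) (hbest : ∀ s, Rch lab E u s → r (owner u) s ≤ r (owner u) t)
    (h : LabelledNE (Function.update lab u (some t)) E owner r x₀) :
    LabelledNE lab E owner r x₀ := by
  obtain ⟨σ, t₀, hσ, hend, hne⟩ := h
  have hlab : ∀ x, x ≠ u → Function.update lab u (some t) x = lab x := fun x hx => by simp [hx]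
  have hσ' : ∀ x, lab x = none → E x (Function.update σ u w x) := by
    intro x hx
    by_cases hxu : x = u
    · subst hxu; simpa using huw
    · simpa [hxu] using hσ x (by simpa [hxu] using hx)
  refine ⟨Function.update σ u w, t₀, hσ', ?_, ?_⟩
  · clear hne
    induction hend with
    | @term x s h =>
      by_cases hxu : x = u
      · subst hxu
        simp only [Function.update_self, Option.some.injEq] at h
        subst h
        exact .step hu (.term (by simpa using hw))
      · exact .term (by rwa [hlab x hxu] at h)
    | @step x s h _ ih =>
      by_cases hxu : x = u
      · subst hxu; simp at h
      · exact .step (by rwa [hlab x hxu] at h) (by simpa [hxu] using ih)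
  · intro i s hs
    have key : ∀ x s, CanReach lab E owner i (Function.update σ u w) x s →
        CanReach (Function.update lab u (some t)) E owner i σ x s ∨
        (r i s ≤ r i t ∧ CanReach (Function.update lab u (some t)) E owner i σ x t) := by
      intro x s h
      induction h with
      | @term x s h =>
        have hxu : x ≠ u := by rintro rfl; simp [hu] at h
        exact .inl (.term (by rwa [hlab x hxu]))
      | @own x y s h ho hxy hy ih =>
        by_cases hxu : x = u
        · subst hxu
          refine .inr ⟨?_, .term (by simp)⟩
          subst ho
          exact hbest s (.step h hxy (hy.rch hσ'))
        · have h' := h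
          rw [← hlab x hxu] at h'
          exact ih.imp (.own h' ho hxy) (And.imp_right (.own h' ho hxy))
      | @other x s h ho hy ih =>
        by_cases hxu : x = u
        · subst hxu
          rw [Function.update_self] at hy
          have : s = t := by
            cases hy with
            | term h => simpa [hw] using h.symm
            | own h => simp [hw] at h
            | other h => simp [hw] at h
          subst this
          exact .inl (.term (by simp))
        · have h' := h
          rw [← hlab x hxu] at h'
          rw [Function.update_of_ne hxu] at ih
          exact ih.imp (.other h' ho) (And.imp_right (.other h' ho))
    rcases key _ _ hs with h | ⟨h1, h2⟩
    · exact hne i s h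
    · exact h1.trans (hne i t h2)

/-- If `u` has an exit `u → w` that is worst for its owner among all labels reachable from the
initial position, then an equilibrium of the game without this exit gives one of the original
game. -/
theorem labelledNE_of_worst [Finite V] (hE : ∀ x, lab x = none → ∃ y, E x y)
    {u w : V} {t : L} (hw : lab w = some t)
    (hworst : ∀ s, Rch lab E x₀ s → r (owner u) t ≤ r (owner u) s)
    {s₀ : L} (hs₀ : Rch lab E x₀ s₀)
    (h : (∃ s, Rch lab (fun x y => E x y ∧ ¬ (x = u ∧ y = w)) x₀ s) →
      LabelledNE lab (fun x y => E x y ∧ ¬ (x = u ∧ y = w)) owner r x₀) :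
    LabelledNE lab E owner r x₀ := by
  by_cases hr : ∃ s, Rch lab (fun x y => E x y ∧ ¬ (x = u ∧ y = w)) x₀ s
  · obtain ⟨σ, t₀, hσ, hend, hne⟩ := h hr
    refine ⟨σ, t₀, fun x hx => (hσ x hx).1, hend, fun i s hs => ?_⟩
    have ht₀ : Rch lab E x₀ t₀ := hend.rch (fun x hx => (hσ x hx).1)
    have key : ∀ x s, CanReach lab E owner i σ x s →
        CanReach lab (fun x y => E x y ∧ ¬ (x = u ∧ y = w)) owner i σ x s ∨
        (owner u = i ∧ s = t) := by
      intro x s h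
      induction h with
      | term h => exact .inl (.term h)
      | @own x y s h ho hxy hy ih =>
        by_cases hxu : x = u ∧ y = w
        · obtain ⟨rfl, rfl⟩ := hxu
          refine .inr ⟨ho, ?_⟩
          cases hy with
          | term h => simpa [hw] using h.symm
          | own h => simp [hw] at h
          | other h => simp [hw] at h
        · exact ih.imp_left (.own h ho ⟨hxy, hxu⟩)
      | @other x s h ho hy ih => exact ih.imp_left (.other h ho)
    rcases key _ _ hs with h | ⟨rfl, rfl⟩
    · exact hne i s h
    · exact hworst _ ht₀
  · -- Every path to a label uses the exit `u → w`, so `t` is the only reachable label.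
    have key : ∀ x s, Rch lab E x s →
        Rch lab (fun x y => E x y ∧ ¬ (x = u ∧ y = w)) x s ∨ s = t := by
      intro x s h
      induction h with
      | term h => exact .inl (.term h)
      | @step x y s h hxy hy ih =>
        by_cases hxu : x = u ∧ y = w
        · obtain ⟨rfl, rfl⟩ := hxu
          refine .inr ?_
          cases hy with
          | term h => simpa [hw] using h.symm
          | step h => simp [hw] at h
        · exact ih.imp_left (.step h ⟨hxy, hxu⟩)
    have only : ∀ s, Rch lab E x₀ s → s = t := fun s hs =>
      (key _ _ hs).resolve_left fun h => hr ⟨s, h⟩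
    obtain ⟨σ, hσ, hend⟩ := exists_ends hE hs₀
    refine ⟨σ, s₀, hσ, hend, fun i s hs => ?_⟩
    rw [only s (hs.rch hσ), only s₀ hs₀]

/-! ### Irreducible games -/

/-- The owner of `x` ranks the label `t` last. -/
def Hates (owner : V → ι) (r : ι → L → ℕ) (t : L) (x : V) : Prop :=
  ∀ s, r (owner x) t ≤ r (owner x) s

/-- One step of the attractor `W t`: the coalition of those who rank `t` last forces a label
other than `t`. -/
def ForceRule (lab : V → Option L) (E : V → V → Prop) (owner : V → ι) (r : ι → L → ℕ) (t : L)
    (S : Set V) (x : V) : Prop :=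
  (∃ s, s ≠ t ∧ lab x = some s) ∨
    lab x = none ∧ ((Hates owner r t x ∧ ∃ y ∈ S, E x y) ∨
      (¬ Hates owner r t x ∧ ∀ y, E x y → y ∈ S))

/-- One step of the set `D t`: label `t` is reached by a path avoiding `W`. -/
def PathRule (lab : V → Option L) (E : V → V → Prop) (W : Set V) (t : L) (S : Set V) (x : V) :
    Prop :=
  x ∉ W ∧ (lab x = some t ∨ lab x = none ∧ ∃ y ∈ S, E x y)

/-- In an irreducible game, a path from `x₀` to `t` avoiding `W t` supports an equilibrium with
outcome `t`. Of `W = W t` only the closedness under `ForceRule` is used. -/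
theorem labelledNE_of_mem
    (hL : ∀ a b c : L, a ≠ b → a ≠ c → b ≠ c → ∀ s, s = a ∨ s = b ∨ s = c)
    (hnt : ∀ x, lab x = none → ∃ y, E x y ∧ lab y = none)
    (hexit : ∀ x y s, lab x = none → E x y → lab y = some s →
      ∃ s₁ s₂, r (owner x) s₁ < r (owner x) s ∧ r (owner x) s < r (owner x) s₂)
    (t : L) (W D : Set V) (ρ : V → ℕ)
    (hW : ∀ x, ForceRule lab E owner r t W x → x ∈ W)
    (hD : ∀ x ∈ D, PathRule lab E W t {y | y ∈ D ∧ ρ y < ρ x} x)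
    (hx₀ : x₀ ∈ D) : LabelledNE lab E owner r x₀ := by
  have hDW : ∀ x ∈ D, x ∉ W := fun x hx => (hD x hx).1
  have hUlab : ∀ x s, x ∉ W → lab x = some s → s = t := by
    intro x s hx hs
    by_contra hst
    exact hx (hW x (.inl ⟨s, hst, hs⟩))
  have hUown : ∀ x y, x ∉ W → lab x = none → Hates owner r t x → E x y → y ∉ W := by
    intro x y hx hl hh hxy hy
    exact hx (hW x (.inr ⟨hl, .inl ⟨hh, y, hy, hxy⟩⟩))
  have hUsucc : ∀ x, x ∉ W → lab x = none → ∃ y, E x y ∧ y ∉ W := by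
    intro x hx hl
    by_cases hh : Hates owner r t x
    · obtain ⟨y, hy, -⟩ := hnt x hl
      exact ⟨y, hy, hUown x y hx hl hh hy⟩
    · by_contra hcon
      push Not at hcon
      exact hx (hW x (.inr ⟨hl, .inr ⟨hh, hcon⟩⟩))
  have key : ∀ x, ∃ y, lab x = none → E x y ∧ (x ∉ W → y ∉ W) ∧ (x ∈ W → lab y = none) ∧
      (x ∈ D → y ∈ D ∧ ρ y < ρ x) := by
    intro x
    by_cases hl : lab x = none
    · by_cases hxD : x ∈ D
      · rcases (hD x hxD).2 with h | ⟨-, y, hy, hxy⟩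
        · simp [hl] at h
        · exact ⟨y, fun _ => ⟨hxy, fun _ => hDW y hy.1, fun h => absurd h (hDW x hxD),
            fun _ => hy⟩⟩
      · by_cases hxW : x ∈ W
        · obtain ⟨y, hxy, hy⟩ := hnt x hl
          exact ⟨y, fun _ => ⟨hxy, fun h => absurd hxW h, fun _ => hy, fun h => absurd h hxD⟩⟩
        · obtain ⟨y, hxy, hy⟩ := hUsucc x hxW hl
          exact ⟨y, fun _ => ⟨hxy, fun _ => hy, fun h => absurd h hxW, fun h => absurd h hxD⟩⟩
    · exact ⟨x, fun h => absurd h hl⟩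
  choose σ hσ using key
  refine ⟨σ, t, fun x hx => (hσ x hx).1, ?_, ?_⟩
  · suffices H : ∀ n x, x ∈ D → ρ x = n → Ends lab σ x t from H _ _ hx₀ rfl
    intro n
    induction n using Nat.strong_induction_on with
    | _ n ih =>
      intro x hx hn
      rcases (hD x hx).2 with h' | ⟨h', -⟩
      · exact .term h'
      · obtain ⟨h1, h2⟩ := (hσ x h').2.2.2 hx
        exact .step h' (ih _ (hn ▸ h2) _ h1 rfl)
  · intro i s hs
    by_cases hi : ∀ s, r i t ≤ r i s
    · -- `i` ranks `t` last: his deviations stay outside `W`, where the only label is `t`.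
      have key : ∀ x s, CanReach lab E owner i σ x s → x ∉ W → s = t := by
        intro x s h
        induction h with
        | term h => exact fun hx => hUlab _ _ hx h
        | own h ho hxy _ ih =>
          subst ho
          exact fun hx => ih (hUown _ _ hx h hi hxy)
        | other h _ _ ih => exact fun hx => ih ((hσ _ h).2.1 hx)
      rw [key _ _ hs (hDW _ hx₀)]
    · -- Otherwise every label other than `t` that `i` reaches is reached by an exit of his own.
      have key : ∀ x s, CanReach lab E owner i σ x s → lab x = some s ∨ s = t ∨
          ∃ s₁ s₂, r i s₁ < r i s ∧ r i s < r i s₂ := by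
        intro x s h
        induction h with
        | term h => exact .inl h
        | own h ho hxy _ ih =>
          rcases ih with ih | ih
          · subst ho
            exact .inr (.inr (hexit _ _ _ h hxy ih))
          · exact .inr ih
        | @other x s h _ _ ih =>
          rcases ih with ih | ih
          · by_cases hx : x ∈ W
            · simp [(hσ x h).2.2.1 hx] at ih
            · exact .inr (.inl (hUlab _ _ ((hσ x h).2.1 hx) ih))
          · exact .inr ih
      have hst : s = t ∨ ∃ s₁ s₂, r i s₁ < r i s ∧ r i s < r i s₂ := by
        rcases key _ _ hs with h | h
        · exact .inl (hUlab _ _ (hDW _ hx₀) h)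
        · exact h
      rcases hst with rfl | ⟨s₁, s₂, h1, h2⟩
      · exact le_rfl
      · push Not at hi
        obtain ⟨s', hs'⟩ := hi
        have h3 := hL s₁ s s₂ (by rintro rfl; omega) (by rintro rfl; omega) (by rintro rfl; omega)
        rcases h3 t with rfl | rfl | rfl
        · rcases h3 s' with rfl | rfl | rfl <;> omega
        · exact le_rfl
        · exact h2.le

/-- Irreducible games with three labels have a labelled equilibrium. -/
theorem labelledNE_of_irreducible [Finite V]
    (hr : ∀ i, Function.Injective (r i))
    (hL : ∀ a b c : L, a ≠ b → a ≠ c → b ≠ c → ∀ s, s = a ∨ s = b ∨ s = c)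
    (hnt : ∀ x, lab x = none → ∃ y, E x y ∧ lab y = none)
    (hexit : ∀ x y s, lab x = none → E x y → lab y = some s →
      ∃ s₁ s₂, r (owner x) s₁ < r (owner x) s ∧ r (owner x) s < r (owner x) s₂)
    {a b c : L} (hab : a ≠ b) (hac : a ≠ c) (hbc : b ≠ c)
    {s₀ : L} (hs₀ : Rch lab E x₀ s₀) : LabelledNE lab E owner r x₀ := by
  have hWex : ∀ t : L, ∃ (W : Set V) (ρ : V → ℕ),
      (∀ x ∈ W, ForceRule lab E owner r t {y | y ∈ W ∧ ρ y < ρ x} x) ∧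
      ∀ x, ForceRule lab E owner r t W x → x ∈ W := by
    intro t
    apply exists_attractor
    rintro S S' x hS (h | ⟨h, ⟨h1, y, hy, h2⟩ | ⟨h1, h2⟩⟩)
    · exact .inl h
    · exact .inr ⟨h, .inl ⟨h1, y, hS hy, h2⟩⟩
    · exact .inr ⟨h, .inr ⟨h1, fun y hy => hS (h2 y hy)⟩⟩
  choose W ρ hW hWcl using hWex
  have hDex : ∀ t : L, ∃ (D : Set V) (ρ : V → ℕ),
      (∀ x ∈ D, PathRule lab E (W t) t {y | y ∈ D ∧ ρ y < ρ x} x) ∧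
      ∀ x, PathRule lab E (W t) t D x → x ∈ D := by
    intro t
    apply exists_attractor
    rintro S S' x hS ⟨h0, h | ⟨h, y, hy, h2⟩⟩
    · exact ⟨h0, .inl h⟩
    · exact ⟨h0, .inr ⟨h, y, hS hy, h2⟩⟩
  choose D δ hD hDcl using hDex
  suffices H : ∃ t, x₀ ∈ D t by
    obtain ⟨t, ht⟩ := H
    exact labelledNE_of_mem hL hnt hexit t (W t) (D t) (δ t) (hWcl t) (hD t) ht
  have hWlab : ∀ t x s, x ∈ W t → lab x = some s → s ≠ t := by
    intro t x s hx hs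
    rcases hW t x hx with ⟨s', hne, h⟩ | ⟨h, -⟩
    · have : s = s' := by simpa [hs] using h
      rwa [this]
    · simp [hs] at h
  have hWall : ∀ t x y, x ∈ W t → lab x = none → ¬ Hates owner r t x → E x y →
      y ∈ W t ∧ ρ t y < ρ t x := by
    intro t x y hx hl hh hxy
    rcases hW t x hx with ⟨s', -, h⟩ | ⟨-, ⟨h, -⟩ | ⟨-, h⟩⟩
    · simp [hl] at h
    · exact absurd h hh
    · exact h y hxy
  have hWsome : ∀ t x, x ∈ W t → lab x = none → ∃ y, E x y ∧ y ∈ W t ∧ ρ t y < ρ t x := by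
    intro t x hx hl
    by_cases hh : Hates owner r t x
    · rcases hW t x hx with ⟨s', -, h⟩ | ⟨-, ⟨-, y, hy, hxy⟩ | ⟨h, -⟩⟩
      · simp [hl] at h
      · exact ⟨y, hxy, hy⟩
      · exact absurd hh h
    · obtain ⟨y, hxy, -⟩ := hnt x hl
      exact ⟨y, hxy, hWall t x y hx hl hh hxy⟩
  have hdisj : ∀ s t x, Hates owner r s x → Hates owner r t x → s = t := fun s t x hs ht =>
    hr _ (le_antisymm (hs t) (ht s))
  have htriple : ∀ a b c : L, a ≠ b → a ≠ c → b ≠ c →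
      ∀ x, x ∈ W a → x ∈ W b → x ∈ W c → False := by
    intro a b c hab hac hbc
    suffices H : ∀ n x, ρ a x = n → x ∈ W a → x ∈ W b → x ∈ W c → False from
      fun x => H _ x rfl
    intro n
    induction n using Nat.strong_induction_on with
    | _ n ih =>
      intro x hn ha hb hc
      rcases hlx : lab x with _ | s
      · -- The coalition owning `x` chooses the move; the others' sets contain all successors.
        obtain ⟨y, hya, hyr, hyb, hyc⟩ : ∃ y, y ∈ W a ∧ ρ a y < ρ a x ∧ y ∈ W b ∧ y ∈ W c := by
          by_cases hhb : Hates owner r b x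
          · obtain ⟨y, hxy, hy, -⟩ := hWsome b x hb hlx
            have h1 := hWall a x y ha hlx (fun h => hab (hdisj _ _ _ h hhb)) hxy
            have h2 := hWall c x y hc hlx (fun h => hbc (hdisj _ _ _ hhb h)) hxy
            exact ⟨y, h1.1, h1.2, hy, h2.1⟩
          · by_cases hhc : Hates owner r c x
            · obtain ⟨y, hxy, hy, -⟩ := hWsome c x hc hlx
              have h1 := hWall a x y ha hlx (fun h => hac (hdisj _ _ _ h hhc)) hxy
              exact ⟨y, h1.1, h1.2, (hWall b x y hb hlx hhb hxy).1, hy⟩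
            · obtain ⟨y, hxy, hy, hlt⟩ := hWsome a x ha hlx
              exact ⟨y, hy, hlt, (hWall b x y hb hlx hhb hxy).1, (hWall c x y hc hlx hhc hxy).1⟩
        exact ih _ (hn ▸ hyr) y rfl hya hyb hyc
      · rcases hL a b c hab hac hbc s with rfl | rfl | rfl
        · exact hWlab _ _ _ ha hlx rfl
        · exact hWlab _ _ _ hb hlx rfl
        · exact hWlab _ _ _ hc hlx rfl
  have hpair : ∀ a b c : L, a ≠ b → a ≠ c → b ≠ c → ∀ x, x ∈ W a → x ∈ W b → x ∈ D c := by
    intro a b c hab hac hbc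
    suffices H : ∀ n x, ρ a x = n → x ∈ W a → x ∈ W b → x ∈ D c from fun x => H _ x rfl
    intro n
    induction n using Nat.strong_induction_on with
    | _ n ih =>
      intro x hn ha hb
      refine hDcl c x ⟨htriple a b c hab hac hbc x ha hb, ?_⟩
      rcases hlx : lab x with _ | s
      · refine .inr ⟨rfl, ?_⟩
        by_cases hhb : Hates owner r b x
        · obtain ⟨y, hxy, hy, -⟩ := hWsome b x hb hlx
          have h1 := hWall a x y ha hlx (fun h => hab (hdisj _ _ _ h hhb)) hxy
          exact ⟨y, ih _ (hn ▸ h1.2) y rfl h1.1 hy, hxy⟩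
        · obtain ⟨y, hxy, hy, hlt⟩ := hWsome a x ha hlx
          exact ⟨y, ih _ (hn ▸ hlt) y rfl hy (hWall b x y hb hlx hhb hxy).1, hxy⟩
      · rcases hL a b c hab hac hbc s with rfl | rfl | rfl
        · exact absurd rfl (hWlab _ _ _ ha hlx)
        · exact absurd rfl (hWlab _ _ _ hb hlx)
        · exact .inl rfl
  have hsingle : ∀ a b c : L, a ≠ b → a ≠ c → b ≠ c → ∀ x, x ∈ W a → x ∈ D b ∨ x ∈ D c := by
    intro a b c hab hac hbc
    suffices H : ∀ n x, ρ a x = n → x ∈ W a → x ∈ D b ∨ x ∈ D c from fun x => H _ x rfl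
    intro n
    induction n using Nat.strong_induction_on with
    | _ n ih =>
      intro x hn ha
      by_cases hb : x ∈ W b
      · exact .inr (hpair a b c hab hac hbc x ha hb)
      by_cases hc : x ∈ W c
      · exact .inl (hpair a c b hac hab hbc.symm x ha hc)
      rcases hlx : lab x with _ | s
      · obtain ⟨y, hxy, hy, hlt⟩ := hWsome a x ha hlx
        rcases ih _ (hn ▸ hlt) y rfl hy with h | h
        · exact .inl (hDcl b x ⟨hb, .inr ⟨hlx, y, h, hxy⟩⟩)
        · exact .inr (hDcl c x ⟨hc, .inr ⟨hlx, y, h, hxy⟩⟩)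
      · rcases hL a b c hab hac hbc s with rfl | rfl | rfl
        · exact absurd rfl (hWlab _ _ _ ha hlx)
        · exact .inl (hDcl _ x ⟨hb, .inl hlx⟩)
        · exact .inr (hDcl _ x ⟨hc, .inl hlx⟩)
  have hWD : ∀ t x, x ∈ W t → ∃ t', x ∈ D t' := by
    intro t x hx
    rcases hL a b c hab hac hbc t with rfl | rfl | rfl
    · rcases hsingle _ b c hab hac hbc x hx with h | h
      exacts [⟨_, h⟩, ⟨_, h⟩]
    · rcases hsingle _ a c hab.symm hbc hac x hx with h | h
      exacts [⟨_, h⟩, ⟨_, h⟩]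
    · rcases hsingle _ a b hac.symm hbc.symm hab x hx with h | h
      exacts [⟨_, h⟩, ⟨_, h⟩]
  induction hs₀ with
  | @term x t h => exact ⟨t, hDcl t x ⟨fun hx => hWlab t x t hx h rfl, .inl h⟩⟩
  | @step x y t h hxy _ ih =>
    obtain ⟨t', ht'⟩ := ih
    by_cases hx : x ∈ W t'
    · exact hWD t' x hx
    · exact ⟨t', hDcl t' x ⟨hx, .inr ⟨h, y, ht', hxy⟩⟩⟩

/-! ### Induction on the number of moves -/

/-- A labelled game with at most three labels, one of which is reachable, has an equilibrium whose
outcome is a label. -/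
theorem exists_labelledNE [Finite V] (owner : V → ι) (r : ι → L → ℕ) (x₀ : V)
    (hr : ∀ i, Function.Injective (r i))
    (hL : ∀ a b c : L, a ≠ b → a ≠ c → b ≠ c → ∀ s, s = a ∨ s = b ∨ s = c) :
    ∀ (n : ℕ) (lab : V → Option L) (E : V → V → Prop),
      {p : V × V | lab p.1 = none ∧ E p.1 p.2}.ncard = n →
      (∀ x, lab x = none → ∃ y, E x y) → (∃ s, Rch lab E x₀ s) →
      LabelledNE lab E owner r x₀ := by
  intro n
  induction n using Nat.strong_induction_on with
  | _ n ih =>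
    rintro lab E rfl hE ⟨s₀, hs₀⟩
    by_cases hbest : ∃ u w t, lab u = none ∧ E u w ∧ lab w = some t ∧
        ∀ s, Rch lab E u s → r (owner u) s ≤ r (owner u) t
    · obtain ⟨u, w, t, hu, huw, hw, hb⟩ := hbest
      refine labelledNE_of_best hu huw hw hb (ih _ ?_ _ _ rfl ?_ ?_)
      · refine Set.ncard_lt_ncard ⟨?_, fun h => ?_⟩ (Set.toFinite _)
        · rintro ⟨x, y⟩ ⟨h1, h2⟩
          have hxu : x ≠ u := by rintro rfl; simp at h1
          exact ⟨by simpa [hxu] using h1, h2⟩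
        · have := (@h (u, w) ⟨hu, huw⟩).1
          simp at this
      · intro x hx
        have hxu : x ≠ u := by rintro rfl; simp at hx
        exact hE x (by simpa [hxu] using hx)
      · clear ih
        induction hs₀ with
        | @term x s h =>
          have hxu : x ≠ u := by rintro rfl; simp [hu] at h
          exact ⟨s, .term (by simpa [hxu] using h)⟩
        | @step x y s h hxy _ ih' =>
          by_cases hxu : x = u
          · exact ⟨t, .term (by simp [hxu])⟩
          · obtain ⟨s', hs'⟩ := ih'
            exact ⟨s', .step (by simpa [hxu] using h) hxy hs'⟩
    push Not at hbest
    -- Otherwise the best of the exits of `u` would be a best label reachable from `u`.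
    have hnt : ∀ x, lab x = none → ∃ y, E x y ∧ lab y = none := by
      intro u hu
      by_contra hcon
      push Not at hcon
      obtain ⟨w, hw, hmax⟩ := Set.exists_max_image {y | E u y}
        (fun y => (lab y).elim 0 (r (owner u))) (Set.toFinite _) (hE u hu)
      obtain ⟨t, ht⟩ := Option.ne_none_iff_exists'.1 (hcon w hw)
      obtain ⟨s, hs, hlt⟩ := hbest u w t hu hw ht
      cases hs with
      | term h => simp [hu] at h
      | @step _ y _ _ huy hy =>
        have h1 := hmax y huy
        cases hy with
        | term h => simp [h, ht] at h1; omega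
        | step h => exact hcon y huy h
    by_cases hworst : ∃ u w t, lab u = none ∧ E u w ∧ lab w = some t ∧
        ∀ s, Rch lab E x₀ s → r (owner u) t ≤ r (owner u) s
    · obtain ⟨u, w, t, hu, huw, hw, hb⟩ := hworst
      refine labelledNE_of_worst hE hw hb hs₀ fun hreach => ih _ ?_ _ _ rfl ?_ hreach
      · refine Set.ncard_lt_ncard ⟨?_, fun h => ?_⟩ (Set.toFinite _)
        · rintro ⟨x, y⟩ ⟨h1, h2⟩
          exact ⟨h1, h2.1⟩
        · exact (@h (u, w) ⟨hu, huw⟩).2.2 ⟨rfl, rfl⟩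
      · intro x hx
        obtain ⟨y, hxy, hy⟩ := hnt x hx
        exact ⟨y, hxy, by rintro ⟨-, rfl⟩; simp [hw] at hy⟩
    push Not at hworst
    have hexit : ∀ x y s, lab x = none → E x y → lab y = some s →
        ∃ s₁ s₂, r (owner x) s₁ < r (owner x) s ∧ r (owner x) s < r (owner x) s₂ := by
      intro x y s hx hxy hy
      obtain ⟨s₁, -, h1⟩ := hworst x y s hx hxy hy
      obtain ⟨s₂, -, h2⟩ := hbest x y s hx hxy hy
      exact ⟨s₁, s₂, h1, h2⟩
    rcases hl : lab x₀ with _ | t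
    · -- A path from `x₀` to a label ends with an exit, which provides three distinct labels.
      have hex : lab x₀ = none → ∃ x y s, lab x = none ∧ E x y ∧ lab y = some s := by
        clear hl ih hworst
        induction hs₀ with
        | term h => exact fun h' => by simp [h] at h'
        | @step x y t h hxy _ ih' =>
          intro _
          rcases hy : lab y with _ | s
          · exact ih' hy
          · exact ⟨x, y, s, h, hxy, hy⟩
      obtain ⟨x, y, s, hx, hxy, hy⟩ := hex hl
      obtain ⟨s₁, s₂, h1, h2⟩ := hexit x y s hx hxy hy
      exact labelledNE_of_irreducible hr hL hnt hexit (a := s₁) (b := s) (c := s₂)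
        (by rintro rfl; omega) (by rintro rfl; omega) (by rintro rfl; omega) hs₀
    · obtain ⟨σ, hσ, hend⟩ := exists_ends hE (Rch.term (E := E) hl)
      refine ⟨σ, t, hσ, hend, fun i s hs => ?_⟩
      cases hs with
      | term h =>
        have : t = s := by simpa [hl] using h
        rw [this]
      | own h => simp [hl] at h
      | other h => simp [hl] at h

end Labelled

/-! ### Back to deterministic graphical games -/

section Translate

variable {V ι : Type*} (Γ : DGGame V ι)

/-- Every terminal is labelled by itself. -/
noncomputable def termLab (x : V) : Option {x // Γ.Terminal x} :=
  if h : Γ.Terminal x then some ⟨x, h⟩ else none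

theorem termLab_eq_none {x : V} : Γ.termLab x = none ↔ ¬ Γ.Terminal x := by
  unfold termLab
  split_ifs with h <;> simp [h]

theorem termLab_eq_some {x : V} {t : {x // Γ.Terminal x}} :
    Γ.termLab x = some t ↔ x = t.1 := by
  unfold termLab
  split_ifs with h
  · simp [Subtype.ext_iff]
  · simp only [false_iff]
    rintro rfl
    exact h t.2

theorem ends_iff {σ : V → V} {x : V} {t : {x // Γ.Terminal x}} :
    Ends Γ.termLab σ x t ↔ ∃ n, (Γ.step σ)^[n] x = t.1 := by
  constructor
  · intro h
    induction h with
    | term h => exact ⟨0, (Γ.termLab_eq_some).1 h⟩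
    | @step x t h _ ih =>
      obtain ⟨n, hn⟩ := ih
      refine ⟨n + 1, ?_⟩
      rw [Function.iterate_succ_apply, step, if_neg ((Γ.termLab_eq_none).1 h), hn]
  · rintro ⟨n, hn⟩
    induction n generalizing x with
    | zero => exact .term ((Γ.termLab_eq_some).2 hn)
    | succ n ih =>
      rw [Function.iterate_succ_apply] at hn
      have h := ih hn
      by_cases hx : Γ.Terminal x
      · rwa [step, if_pos hx] at h
      · rw [step, if_neg hx] at h
        exact .step ((Γ.termLab_eq_none).2 hx) h

theorem ends_of_outcome {σ : V → V} {s : V} (h : Γ.outcome σ = some s) :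
    ∃ hs : Γ.Terminal s, Ends Γ.termLab σ Γ.init ⟨s, hs⟩ := by
  unfold outcome at h
  split_ifs at h with hex
  have hs : Γ.iter σ (Nat.find hex) = s := by simpa using h
  have ht : Γ.Terminal s := hs ▸ Nat.find_spec hex
  exact ⟨ht, (Γ.ends_iff).2 ⟨_, hs⟩⟩

theorem outcome_of_ends {σ : V → V} {t : {x // Γ.Terminal x}}
    (h : Ends Γ.termLab σ Γ.init t) : Γ.outcome σ = some t.1 := by
  obtain ⟨n, hn⟩ := (Γ.ends_iff).1 h
  have hex : ∃ n, Γ.Terminal (Γ.iter σ n) := ⟨n, by rw [iter, hn]; exact t.2⟩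
  have hfix : Γ.step σ (Γ.iter σ (Nat.find hex)) = Γ.iter σ (Nat.find hex) := by
    rw [step, if_pos (Nat.find_spec hex)]
  obtain ⟨k, rfl⟩ : ∃ k, n = k + Nat.find hex :=
    ⟨n - Nat.find hex, by
      have : Nat.find hex ≤ n := Nat.find_min' hex (by rw [iter, hn]; exact t.2)
      omega⟩
  rw [Function.iterate_add_apply] at hn
  have h2 : Γ.iter σ (Nat.find hex) = t.1 := by
    rw [← hn]
    exact (Function.iterate_fixed hfix k).symm
  unfold outcome
  rw [dif_pos hex, h2]

theorem canReach_of_ends {i : ι} {σ σ' : V → V} (hσ' : Γ.IsSituation σ')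
    (hag : ∀ x, Γ.owner x ≠ i → σ' x = σ x) {x : V} {t : {x // Γ.Terminal x}}
    (h : Ends Γ.termLab σ' x t) : CanReach Γ.termLab Γ.adj Γ.owner i σ x t := by
  induction h with
  | term h => exact .term h
  | @step x t h _ ih =>
    by_cases hi : Γ.owner x = i
    · exact .own h hi (hσ' x ((Γ.termLab_eq_none).1 h)) ih
    · exact .other h hi (hag x hi ▸ ih)

end Translate

end DGGame

open DGGame

/-- Every terminal DG game with at most 3 terminals has a Nash equilibrium
(in pure stationary strategies). -/
theorem stmt0 {V ι : Type*} [Finite V] (Γ : DGGame V ι)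
    (hinit : ¬ Γ.Terminal Γ.init) (hpref : Γ.PrefOrder)
    (hterm : Γ.TerminalGame)
    (hT3 : {x | Γ.Terminal x}.ncard ≤ 3) :
    ∃ σ : V → V, Γ.IsNE σ := by
  have hnone : (none : Option V) ∈ Γ.OutcomeSet := .inl rfl
  have hsome : ∀ t : {x // Γ.Terminal x}, some t.1 ∈ Γ.OutcomeSet := fun t =>
    .inr ⟨t.1, t.2, rfl⟩
  have hE : ∀ x, Γ.termLab x = none → ∃ y, Γ.adj x y := by
    intro x hx
    have := (Γ.termLab_eq_none).1 hx
    unfold Terminal at this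
    push Not at this
    exact this
  by_cases hreach : ∃ t, Rch Γ.termLab Γ.adj Γ.init t
  · -- The rank of a terminal is the number of terminals worse than it.
    let r : ι → {x // Γ.Terminal x} → ℕ := fun i t =>
      {s : {x // Γ.Terminal x} | Γ.pref i (some t.1) (some s.1)}.ncard
    have hr : ∀ i s t, Γ.pref i (some s.1) (some t.1) → r i t < r i s := by
      intro i s t hst
      obtain ⟨hirr, htrans, -⟩ := hpref i
      refine Set.ncard_lt_ncard ⟨fun q hq => ?_, fun h => ?_⟩ (Set.toFinite _)
      · exact htrans _ (hsome s) _ (hsome t) _ (hsome q) hst hq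
      · exact hirr _ (hsome t) (h hst)
    have hinj : ∀ i, Function.Injective (r i) := by
      intro i s t hst
      by_contra hne
      rcases (hpref i).2.2 _ (hsome s) _ (hsome t)
        (by simpa [Subtype.ext_iff] using hne) with h | h
      · have := hr i s t h; omega
      · have := hr i t s h; omega
    have hL : ∀ a b c : {x // Γ.Terminal x}, a ≠ b → a ≠ c → b ≠ c →
        ∀ s, s = a ∨ s = b ∨ s = c := by
      intro a b c hab hac hbc s
      by_contra hcon
      push Not at hcon
      obtain ⟨ha, hb, hc⟩ := hcon
      have hsub : (({s.1, a.1, b.1, c.1} : Finset V) : Set V) ⊆ {x | Γ.Terminal x} := by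
        intro x hx
        simp only [Finset.coe_insert, Finset.coe_singleton, Set.mem_insert_iff,
          Set.mem_singleton_iff] at hx
        rcases hx with rfl | rfl | rfl | rfl
        exacts [s.2, a.2, b.2, c.2]
      have h4 := Set.ncard_le_ncard hsub (Set.toFinite _)
      rw [Set.ncard_coe_finset] at h4
      have : ({s.1, a.1, b.1, c.1} : Finset V).card = 4 := by
        rw [Finset.card_insert_of_notMem, Finset.card_insert_of_notMem,
          Finset.card_insert_of_notMem, Finset.card_singleton] <;>
        simp [← Subtype.ext_iff, *]
      omega
    obtain ⟨σ, t, hσ, hend, hne⟩ := exists_labelledNE Γ.owner r Γ.init hinj hL _ Γ.termLab Γ.adj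
      rfl hE hreach
    refine ⟨σ, fun x hx => hσ x ((Γ.termLab_eq_none).2 hx), fun i σ' hσ' hag hp => ?_⟩
    rw [Γ.outcome_of_ends hend] at hp
    rcases ho : Γ.outcome σ' with _ | s
    · rw [ho] at hp
      exact (hpref i).1 _ hnone
        ((hpref i).2.1 _ hnone _ (hsome t) _ hnone hp (hterm i t.1 t.2))
    · rw [ho] at hp
      obtain ⟨hs, hends⟩ := Γ.ends_of_outcome ho
      have h1 := hne i _ (Γ.canReach_of_ends hσ' hag hends)
      have h2 := hr i ⟨s, hs⟩ t hp
      omega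
  · have hout : ∀ σ, Γ.IsSituation σ → Γ.outcome σ = none := by
      intro σ hσ
      rcases ho : Γ.outcome σ with _ | s
      · rfl
      · obtain ⟨hs, hends⟩ := Γ.ends_of_outcome ho
        exact absurd ⟨_, hends.rch fun x hx => hσ x ((Γ.termLab_eq_none).1 hx)⟩ hreach
    have key : ∀ x, ∃ y, ¬ Γ.Terminal x → Γ.adj x y := by
      intro x
      by_cases hx : Γ.Terminal x
      · exact ⟨x, fun h => absurd hx h⟩
      · obtain ⟨y, hy⟩ := hE x ((Γ.termLab_eq_none).2 hx)
        exact ⟨y, fun _ => hy⟩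
    choose σ hσ using key
    refine ⟨σ, hσ, fun i σ' hσ' _ hp => ?_⟩
    rw [hout σ hσ, hout σ' hσ'] at hp
    exact (hpref i).1 _ hnone hp
end

section
/- Every deterministic graphical game that is terminal, has at most 3 terminals, and in which some terminal can be reached from the initial position v₀ by a directed path, has a terminal Nash equilibrium, i.e., a Nash equilibrium σ with g(σ) ∈ T. -/
/-!
Terminals are replaced by labels in `Fin 3` (`LabelledGame`), so that a position may be turned into
a terminal without touching the graph, and equilibria are expressed by reachability only
(`LabelledGame.HasNE`).

*Reductions* (`hasNE_of_edges`, induction on the number of moves). A position with a move to a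
terminal that is best for its owner, or all of whose moves lead to terminals with one label, can be
made a terminal (`hasNE_of_setLab`). A move to a terminal that is worst for its owner can be deleted
(`hasNE_of_delEdge`), unless no terminal is reachable afterwards; but then only one label is
reachable and any play reaching it is an equilibrium (`hasNE_of_unique`). Afterwards every position
has a move to a non-terminal, and terminal moves lead only to the middle outcome of the owner
(`Reduced`).

*Reduced games* (`hasNE_of_reduced`). For a label `x`, the coalition of the players for whom `x` is
the worst can force, from the positions in the attractor `Force x`, a label other than `x`. If some
`x` is reachable from the initial position by a path outside `Force x` (`Good x`), let everybody
follow such a path, let the other players keep the play outside `Force x` whenever they can, and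
let nobody make terminal moves to labels other than `x`. Players for whom `x` is worst cannot enter
`Force x`; any other player can, by deviating, only reach `x` or his middle outcome, which is no
better than `x`. So this is an equilibrium. Such an `x` exists: the three sets `Force x` have no
common point; from a point of two of them, the two coalitions together force the third label `z`
along a path outside `Force z`; and a path towards a terminal either meets a point in two of the
sets, or runs outside all of them, or follows one of the attractors until it meets a second one,
which it must because every terminal lies in two of the sets.
-/

open Classical

open Relation

/-! ### Labelled games -/

/-- A graphical game with outcome labels in `Fin 3`: the terminals are the positions carrying a
label (moves out of them are ignored), and player `i` values a label `s` at `val i s`, ties allowed,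
any label being better than an infinite play. -/
structure LabelledGame (V ι : Type*) where
  adj : V → V → Prop
  lab : V → Option (Fin 3)
  own : V → ι
  val : ι → Fin 3 → ℕ
  init : V

namespace LabelledGame

variable {V ι : Type*}

/-- The moves of the game. -/
def Move (G : LabelledGame V ι) (u v : V) : Prop := G.lab u = none ∧ G.adj u v

/-- The moves made in the situation `σ`. -/
def Play (G : LabelledGame V ι) (σ : V → V) (u v : V) : Prop := G.lab u = none ∧ v = σ u

/-- The moves possible when player `i` moves freely and everybody else follows `σ`. -/
def Dev (G : LabelledGame V ι) (i : ι) (σ : V → V) (u v : V) : Prop :=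
  G.lab u = none ∧ G.adj u v ∧ (G.own u = i ∨ v = σ u)

/-- Existence of a terminal Nash equilibrium: the play of `σ` ends at label `z`, and no player can
reach a label of larger value by deviating alone. -/
def HasNE (G : LabelledGame V ι) : Prop :=
  ∃ σ : V → V, (∀ u, G.lab u = none → G.adj u (σ u)) ∧
    ∃ z y, G.lab y = some z ∧ ReflTransGen (G.Play σ) G.init y ∧
      ∀ i y' s, ReflTransGen (G.Dev i σ) G.init y' → G.lab y' = some s → G.val i s ≤ G.val i z

/-- Some terminal is reachable from the initial position. -/
def CanEnd (G : LabelledGame V ι) : Prop :=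
  ∃ y, G.lab y ≠ none ∧ ReflTransGen G.Move G.init y

/-- Every non-terminal position has a move. -/
def Live (G : LabelledGame V ι) : Prop := ∀ u, G.lab u = none → ∃ v, G.adj u v

/-- Paths to a target set can be made stationary: a single function `f`, always stepping closer to
`S`, leads every point that can reach `S` into `S`. -/
theorem exists_stationary (R : V → V → Prop) (S : V → Prop) :
    ∃ f : V → V, ∀ u, (∃ y, S y ∧ ReflTransGen R u y) →
      (¬ S u → R u (f u)) ∧
      ∃ y, S y ∧ ReflTransGen (fun a b => ¬ S a ∧ R a b ∧ b = f a) u y := by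
  classical
  -- `D n u`: a path of length `n` leads from `u` to `S`.
  let D : ℕ → V → Prop := fun n =>
    Nat.rec (motive := fun _ => V → Prop) S (fun _ P u => ∃ v, R u v ∧ P v) n
  have hD : ∀ u, (∃ y, S y ∧ ReflTransGen R u y) → ∃ n, D n u := by
    rintro u ⟨y, hy, h⟩
    induction h using ReflTransGen.head_induction_on with
    | refl => exact ⟨0, hy⟩
    | head h1 _ ih => obtain ⟨n, hn⟩ := ih; exact ⟨n + 1, _, h1, hn⟩
  have hstep : ∀ u : V, ∃ v : V, ∀ h : ∃ n : ℕ, D n u, ¬ S u → R u v ∧ ∃ n : ℕ, n < Nat.find h ∧ D n v := by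
    intro u
    by_cases h : ∃ n, D n u
    · by_cases hS : S u
      · exact ⟨u, fun _ h => absurd hS h⟩
      · have h1 := Nat.find_spec h
        rcases hn : Nat.find h with _ | n
        · rw [hn] at h1; exact absurd h1 hS
        · rw [hn] at h1
          obtain ⟨v, hv, hv'⟩ := h1
          refine ⟨v, fun h' _ => ⟨hv, n, ?_, hv'⟩⟩
          have : Nat.find h' = Nat.find h := rfl
          omega
    · exact ⟨u, fun h' => absurd h' h⟩
  choose f hf using hstep
  have key : ∀ n u, D n u → ∃ y, S y ∧ ReflTransGen (fun a b => ¬ S a ∧ R a b ∧ b = f a) u y := by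
    intro n
    induction n using Nat.strong_induction_on with
    | _ n ih =>
      intro u hu
      by_cases hS : S u
      · exact ⟨u, hS, .refl⟩
      · obtain ⟨h1, k, hk, hk'⟩ := hf u ⟨n, hu⟩ hS
        have : Nat.find (⟨n, hu⟩ : ∃ n, D n u) ≤ n := Nat.find_min' _ hu
        obtain ⟨y, hy, hp⟩ := ih k (by omega) _ hk'
        exact ⟨y, hy, .head ⟨hS, h1, rfl⟩ hp⟩
  refine ⟨f, fun u hu => ⟨fun hS => (hf u (hD u hu) hS).1, ?_⟩⟩
  obtain ⟨n, hn⟩ := hD u hu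
  exact key n u hn

/-! ### Reduced games -/

/-- The attractor from which the coalition of the players `i` with worst label `w i = x` forces the
play to end at a label other than `x`. -/
inductive Force (G : LabelledGame V ι) (w : ι → Fin 3) (x : Fin 3) : V → Prop
  | term {u : V} {s : Fin 3} : G.lab u = some s → s ≠ x → Force G w x u
  | step {u v : V} : G.lab u = none → w (G.own u) = x → G.adj u v → Force G w x v → Force G w x u
  | all {u : V} : G.lab u = none → w (G.own u) ≠ x → (∀ v, G.adj u v → Force G w x v) →
      Force G w x u

/-- The moves that stay outside `Force z`. -/
def Avoid (G : LabelledGame V ι) (w : ι → Fin 3) (z : Fin 3) (u v : V) : Prop :=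
  G.lab u = none ∧ G.adj u v ∧ ¬ G.Force w z u ∧ ¬ G.Force w z v

/-- The positions from which label `z` is reachable by a path outside `Force z`. -/
def Good (G : LabelledGame V ι) (w : ι → Fin 3) (z : Fin 3) (u : V) : Prop :=
  ∃ y, G.lab y = some z ∧ ReflTransGen (G.Avoid w z) u y

variable {G : LabelledGame V ι} {w : ι → Fin 3} {x y z : Fin 3} {u v : V}

theorem Force.lab_ne (h : G.Force w x u) {s : Fin 3} (hs : G.lab u = some s) : s ≠ x := by
  cases h <;> simp_all

theorem Force.exists_adj (h : G.Force w x u) (hu : G.lab u = none) (hw : w (G.own u) = x) :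
    ∃ v, G.adj u v ∧ G.Force w x v := by
  cases h with
  | term h _ => simp_all
  | step _ _ h1 h2 => exact ⟨_, h1, h2⟩
  | all _ h _ => exact absurd hw h

theorem Force.forall_adj (h : G.Force w x u) (hu : G.lab u = none) (hw : w (G.own u) ≠ x) :
    ∀ v, G.adj u v → G.Force w x v := by
  cases h with
  | term h _ => simp_all
  | step _ h _ _ => exact absurd h hw
  | all _ _ h => exact h

theorem Good.not_force (h : G.Good w z u) : ¬ G.Force w z u := by
  obtain ⟨y, hy, hp⟩ := h
  rcases hp.cases_head with rfl | ⟨v, hv, -⟩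
  · exact fun hF => hF.lab_ne hy rfl
  · exact hv.2.2.1

theorem Good.head (h : G.Good w z v) (hu : G.lab u = none) (ha : G.adj u v)
    (hF : ¬ G.Force w z u) : G.Good w z u := by
  have hv := h.not_force
  obtain ⟨y, hy, hp⟩ := h
  exact ⟨y, hy, .head ⟨hu, ha, hF, hv⟩ hp⟩

/-- A position in two attractors has a successor in both: its owner belongs to at most one of the
two coalitions, so every move stays in at least one of the attractors. -/
theorem Force.exists_adj_both (hG : G.Live) (hxy : x ≠ y) (hx : G.Force w x u)
    (hy : G.Force w y u) (hu : G.lab u = none) :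
    ∃ v, G.adj u v ∧ G.Force w x v ∧ G.Force w y v := by
  by_cases h1 : w (G.own u) = x
  · obtain ⟨v, hv, hv'⟩ := hx.exists_adj hu h1
    exact ⟨v, hv, hv', hy.forall_adj hu (h1 ▸ hxy) v hv⟩
  · by_cases h2 : w (G.own u) = y
    · obtain ⟨v, hv, hv'⟩ := hy.exists_adj hu h2
      exact ⟨v, hv, hx.forall_adj hu h1 v hv, hv'⟩
    · obtain ⟨v, hv⟩ := hG u hu
      exact ⟨v, hv, hx.forall_adj hu h1 v hv, hy.forall_adj hu h2 v hv⟩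

/-- The three attractors have no common point, since no label differs from all three labels. -/
theorem Force.not_three (hG : G.Live) (hxy : x ≠ y) (hxz : x ≠ z) (hyz : y ≠ z)
    (hx : G.Force w x u) : G.Force w y u → ¬ G.Force w z u := by
  induction hx with
  | @term u s hs hne =>
    intro hy hz
    have h1 := hy.lab_ne hs
    have h2 := hz.lab_ne hs
    omega
  | @step u v hu hw ha _ ih =>
    intro hy hz
    exact ih (hy.forall_adj hu (hw ▸ hxy) v ha) (hz.forall_adj hu (hw ▸ hxz) v ha)
  | @all u hu hw _ ih =>
    intro hy hz
    obtain ⟨v, hv, h1, h2⟩ := hy.exists_adj_both hG hyz hz hu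
    exact ih v hv h1 h2

theorem Force.good_of_two (hG : G.Live) (hxy : x ≠ y) (hxz : x ≠ z) (hyz : y ≠ z)
    (hx : G.Force w x u) : G.Force w y u → G.Good w z u := by
  induction hx with
  | @term u s hs hne =>
    intro hy
    have h1 := hy.lab_ne hs
    have : s = z := by omega
    exact ⟨u, this ▸ hs, .refl⟩
  | @step u v hu hw ha hv ih =>
    intro hy
    exact (ih (hy.forall_adj hu (hw ▸ hxy) v ha)).head hu ha
      (Force.not_three hG hxy hxz hyz (.step hu hw ha hv) hy)
  | @all u hu hw hall ih =>
    intro hy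
    have hx : G.Force w x u := .all hu hw hall
    obtain ⟨v, hv, h1, h2⟩ := hx.exists_adj_both hG hxy hy hu
    exact (ih v hv h2).head hu hv (Force.not_three hG hxy hxz hyz hx hy)

theorem exists_third {x y : Fin 3} (h : x ≠ y) : ∃ z, x ≠ z ∧ y ≠ z := by
  revert x y; decide

/-- From a position in one attractor, follow the attractor until a second one is met. -/
theorem Force.exists_good (hG : G.Live) (hx : G.Force w x u) : ∃ z, z ≠ x ∧ G.Good w z u := by
  induction hx with
  | @term u s hs hne =>
    obtain ⟨y, hxy, hsy⟩ := exists_third hne.symm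
    exact ⟨s, hne, Force.good_of_two hG hxy hne.symm hsy.symm (.term hs hne) (.term hs hsy)⟩
  | @step u v hu hw ha hv ih =>
    obtain ⟨z, hz, hg⟩ := ih
    by_cases hF : G.Force w z u
    · obtain ⟨y, h1, h2⟩ := exists_third hz.symm
      exact ⟨y, h1.symm, Force.good_of_two hG hz.symm h1 h2 (.step hu hw ha hv) hF⟩
    · exact ⟨z, hz, hg.head hu ha hF⟩
  | @all u hu hw hall ih =>
    obtain ⟨v, ha⟩ := hG u hu
    obtain ⟨z, hz, hg⟩ := ih v ha
    by_cases hF : G.Force w z u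
    · obtain ⟨y, h1, h2⟩ := exists_third hz.symm
      exact ⟨y, h1.symm, Force.good_of_two hG hz.symm h1 h2 (.all hu hw hall) hF⟩
    · exact ⟨z, hz, hg.head hu ha hF⟩

theorem exists_good_init (hG : G.Live) (hE : G.CanEnd) : ∃ z, G.Good w z G.init := by
  obtain ⟨t, ht, hp⟩ := hE
  generalize G.init = v₀ at hp ⊢
  induction hp using ReflTransGen.head_induction_on with
  | refl =>
    obtain ⟨s, hs⟩ := Option.ne_none_iff_exists'.1 ht
    exact ⟨s, t, hs, .refl⟩
  | @head u v huv _ ih =>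
    obtain ⟨z, hz⟩ := ih
    by_cases hF : G.Force w z u
    · obtain ⟨z', -, hz'⟩ := hF.exists_good hG
      exact ⟨z', hz'⟩
    · exact ⟨z, hz.head huv.1 huv.2 hF⟩

/-- Every non-terminal position has a move to a non-terminal, and its moves to terminals carry the
label `m i` for its owner `i`. -/
def Reduced (G : LabelledGame V ι) (m : ι → Fin 3) : Prop :=
  (∀ u, G.lab u = none → ∃ v, G.adj u v ∧ G.lab v = none) ∧
  ∀ u v s, G.lab u = none → G.adj u v → G.lab v = some s → s = m (G.own u)

/-- `hm` says that `m i` is at most as good as any label other than the worst label `w i`; the worst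
label itself enters only through the definition of `Force`. -/
theorem hasNE_of_reduced {m : ι → Fin 3} (hm : ∀ i s, s ≠ w i → G.val i (m i) ≤ G.val i s)
    (hR : G.Reduced m) (hE : G.CanEnd) : G.HasNE := by
  have hG : G.Live := fun u hu => (hR.1 u hu).imp fun _ h => h.1
  obtain ⟨z, hz⟩ := exists_good_init (w := w) hG hE
  obtain ⟨f, hf⟩ := exists_stationary (G.Avoid w z) (fun y => G.lab y = some z)
  have hnF : ∀ v, ¬ G.Force w z v → G.lab v = none ∨ G.lab v = some z := by
    intro v hv
    by_contra hcon
    push Not at hcon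
    obtain ⟨s, hs⟩ := Option.ne_none_iff_exists'.1 hcon.1
    exact hv (.term hs (by rintro rfl; exact hcon.2 hs))
  have hσ : ∀ u, ∃ v, G.lab u = none →
      G.adj u v ∧ (G.lab v = none ∨ G.lab v = some z) ∧
      (¬ G.Force w z u → w (G.own u) ≠ z → ¬ G.Force w z v) ∧
      (G.Good w z u → v = f u) := by
    intro u
    by_cases hu : G.lab u = none
    · by_cases hg : G.Good w z u
      · obtain ⟨-, h2, -, h4⟩ := (hf u hg).1 (by simp [hu])
        exact ⟨f u, fun _ => ⟨h2, hnF _ h4, fun _ _ => h4, fun _ => rfl⟩⟩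
      · by_cases hF : ¬ G.Force w z u ∧ w (G.own u) ≠ z
        · have : ∃ v, G.adj u v ∧ ¬ G.Force w z v := by
            by_contra hcon
            push Not at hcon
            exact hF.1 (.all hu hF.2 hcon)
          obtain ⟨v, h1, h2⟩ := this
          exact ⟨v, fun _ => ⟨h1, hnF _ h2, fun _ _ => h2, fun h => absurd h hg⟩⟩
        · obtain ⟨v, h1, h2⟩ := hR.1 u hu
          exact ⟨v, fun _ => ⟨h1, .inl h2, fun h h' => absurd ⟨h, h'⟩ hF, fun h => absurd h hg⟩⟩
    · exact ⟨u, fun h => absurd h hu⟩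
  choose σ hσ using hσ
  refine ⟨σ, fun u hu => (hσ u hu).1, z, ?_⟩
  obtain ⟨t, ht, hp⟩ := (hf _ hz).2
  refine ⟨t, ht, ?_, ?_⟩
  · have : ∀ u, ReflTransGen (fun a b => ¬ G.lab a = some z ∧ G.Avoid w z a b ∧ b = f a) u t →
        G.Good w z u ∧ ReflTransGen (G.Play σ) u t := by
      intro u hu
      induction hu using ReflTransGen.head_induction_on with
      | refl => exact ⟨⟨t, ht, .refl⟩, .refl⟩
      | @head a b hab _ ih =>
        obtain ⟨-, ⟨h1, h2, h3, h4⟩, h5⟩ := hab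
        have hg := ih.1.head h1 h2 h3
        exact ⟨hg, .head ⟨h1, by rw [h5, (hσ a h1).2.2.2 hg]⟩ ih.2⟩
    exact (this _ hp).2
  · intro i t' s hd hs
    by_cases hw : w i = z
    · have hinv : ¬ G.Force w z t' := by
        clear hs
        induction hd with
        | refl => exact hz.not_force
        | @tail a b _ hab ih =>
          obtain ⟨h1, h2, h3⟩ := hab
          by_cases hwa : w (G.own a) = z
          · exact fun hb => ih (.step h1 hwa h2 hb)
          · rcases h3 with h3 | h3
            · exact absurd (h3 ▸ hw) hwa
            · exact h3 ▸ (hσ a h1).2.2.1 ih hwa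
      have : s = z := by
        have := hnF _ hinv
        simp_all
      rw [this]
    · have hinv : G.lab t' = none ∨ G.lab t' = some z ∨ G.lab t' = some (m i) := by
        clear hs
        induction hd with
        | refl => exact (hnF _ hz.not_force).imp id .inl
        | @tail a b _ hab ih =>
          obtain ⟨h1, h2, h3⟩ := hab
          rcases h3 with h3 | h3
          · rcases hb : G.lab b with _ | s
            · exact .inl rfl
            · rw [hR.2 a b s h1 h2 hb, h3]
              exact .inr (.inr rfl)
          · rw [h3]
            exact (hσ a h1).2.1.imp id .inl
      have h2 := hm i z (fun h => hw h.symm)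
      rw [hs] at hinv
      rcases hinv with h | h | h
      · cases h
      · cases h; exact le_rfl
      · cases h; exact h2

/-! ### Reductions -/

theorem hasNE_of_unique (hG : G.Live) (hE : G.CanEnd) (s : Fin 3)
    (hs : ∀ y s', ReflTransGen G.Move G.init y → G.lab y = some s' → s' = s) : G.HasNE := by
  obtain ⟨f, hf⟩ := exists_stationary G.Move (fun y => G.lab y ≠ none)
  have hσ : ∀ u, ∃ v, G.lab u = none → G.adj u v ∧ (G.Move u (f u) → v = f u) := by
    intro u
    by_cases hu : G.lab u = none
    · by_cases h : G.Move u (f u)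
      · exact ⟨f u, fun _ => ⟨h.2, fun _ => rfl⟩⟩
      · obtain ⟨v, hv⟩ := hG u hu
        exact ⟨v, fun _ => ⟨hv, fun h' => absurd h' h⟩⟩
    · exact ⟨u, fun h => absurd h hu⟩
  choose σ hσ using hσ
  obtain ⟨t, ht, hp⟩ := (hf _ hE).2
  have hts : G.lab t = some s := by
    obtain ⟨s', hs'⟩ := Option.ne_none_iff_exists'.1 ht
    rw [hs', hs t s' (ReflTransGen.mono (fun _ _ h => h.2.1) _ _ hp) hs']
  refine ⟨σ, fun u hu => (hσ u hu).1, s, t, hts, ?_, ?_⟩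
  · refine ReflTransGen.mono (fun a b h => ⟨h.2.1.1, ?_⟩) _ _ hp
    obtain ⟨-, h2, rfl⟩ := h
    exact ((hσ a h2.1).2 h2).symm
  · intro i y' s' hd hs'
    rw [hs y' s' (ReflTransGen.mono (fun _ _ h => ⟨h.1, h.2.1⟩) _ _ hd) hs']

/-- The game in which the position `u₀` becomes a terminal with label `s`. -/
noncomputable def setLab (G : LabelledGame V ι) (u₀ : V) (s : Fin 3) : LabelledGame V ι :=
  { G with lab := Function.update G.lab u₀ (some s) }

/-- The game with the move from `u₀` to `y₀` deleted. -/
def delEdge (G : LabelledGame V ι) (u₀ y₀ : V) : LabelledGame V ι :=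
  { G with adj := fun u v => G.adj u v ∧ ¬ (u = u₀ ∧ v = y₀) }

theorem setLab_self (u₀ : V) (s : Fin 3) : (G.setLab u₀ s).lab u₀ = some s := by
  simp [setLab]

theorem setLab_of_ne {u₀ : V} (s : Fin 3) (h : u ≠ u₀) : (G.setLab u₀ s).lab u = G.lab u := by
  simp [setLab, h]

theorem setLab_none {u₀ : V} {s : Fin 3} (h : (G.setLab u₀ s).lab u = none) :
    u ≠ u₀ ∧ G.lab u = none := by
  have h1 : u ≠ u₀ := by
    rintro rfl
    rw [setLab_self] at h
    cases h
  exact ⟨h1, setLab_of_ne (G := G) s h1 ▸ h⟩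

theorem Live.setLab (hG : G.Live) (u₀ : V) (s : Fin 3) : (G.setLab u₀ s).Live :=
  fun u hu => hG u (setLab_none hu).2

theorem CanEnd.setLab (hE : G.CanEnd) (u₀ : V) (s : Fin 3) : (G.setLab u₀ s).CanEnd := by
  obtain ⟨t, ht, hp⟩ := hE
  have : ∀ u, ReflTransGen G.Move u t →
      ∃ y, (G.setLab u₀ s).lab y ≠ none ∧ ReflTransGen (G.setLab u₀ s).Move u y := by
    intro u hu
    induction hu using ReflTransGen.head_induction_on with
    | refl => exact ⟨t, fun h => ht (setLab_none h).2, .refl⟩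
    | @head a b hab _ ih =>
      by_cases h : (G.setLab u₀ s).lab a = none
      · obtain ⟨y, hy, hy'⟩ := ih
        exact ⟨y, hy, .head ⟨h, hab.2⟩ hy'⟩
      · exact ⟨a, h, .refl⟩
  exact this _ hp

/-- A position with a terminal move of label `s` may be made a terminal if `s` is best for its owner
or if all its moves carry that label. -/
theorem hasNE_of_setLab {u₀ y₀ : V} {s : Fin 3} (hu₀ : G.lab u₀ = none) (ha : G.adj u₀ y₀)
    (hy₀ : G.lab y₀ = some s)
    (H : ∀ v, G.adj u₀ v → G.lab v = some s ∨ ∀ s', G.val (G.own u₀) s' ≤ G.val (G.own u₀) s)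
    (hne : (G.setLab u₀ s).HasNE) : G.HasNE := by
  classical
  obtain ⟨σ, hσ, z, y, hy, hp, hd⟩ := hne
  have hσ' : ∀ u, u ≠ u₀ → Function.update σ u₀ y₀ u = σ u := fun u hu => by simp [hu]
  have hp' : ReflTransGen (G.Play (Function.update σ u₀ y₀)) G.init y := by
    refine ReflTransGen.mono (fun a b h => ?_) _ _ hp
    obtain ⟨h1, h2⟩ := setLab_none h.1
    exact ⟨h2, by rw [hσ' a h1]; exact h.2⟩
  refine ⟨Function.update σ u₀ y₀, ?_, z, ?_⟩
  · intro u hu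
    by_cases h : u = u₀
    · subst h; simpa using ha
    · rw [hσ' u h]
      exact hσ u (by rw [setLab_of_ne s h]; exact hu)
  have hex : ∃ y, G.lab y = some z ∧
      ReflTransGen (G.Play (Function.update σ u₀ y₀)) G.init y := by
    by_cases h : y = u₀
    · subst h
      rw [setLab_self] at hy
      cases hy
      exact ⟨y₀, hy₀, hp'.tail ⟨hu₀, by simp⟩⟩
    · exact ⟨y, by rwa [setLab_of_ne s h] at hy, hp'⟩
  obtain ⟨t, ht, ht'⟩ := hex
  refine ⟨t, ht, ht', ?_⟩
  -- A deviation either never moves out of `u₀`, or reaches `u₀`, where `s` is already available.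
  intro i y' s' hdev hs'
  have hinv : ReflTransGen ((G.setLab u₀ s).Dev i σ) G.init y' ∨
      (ReflTransGen ((G.setLab u₀ s).Dev i σ) G.init u₀ ∧
        (G.lab y' = some s ∨ ∀ s', G.val i s' ≤ G.val i s)) := by
    clear hs'
    induction hdev with
    | refl => exact .inl .refl
    | @tail a b _ hab ih =>
      obtain ⟨h1, h2, h3⟩ := hab
      rcases ih with ih | ⟨ih, ih'⟩
      · by_cases h : a = u₀
        · subst h
          refine .inr ⟨ih, ?_⟩
          rcases h3 with h3 | h3
          · exact h3 ▸ H b h2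
          · left; rw [h3]; simpa using hy₀
        · refine .inl (ih.tail ⟨by rw [setLab_of_ne s h]; exact h1, h2, ?_⟩)
          rwa [hσ' a h] at h3
      · refine .inr ⟨ih, .inr ?_⟩
        rcases ih' with h | h
        · simp [h1] at h
        · exact h
  rcases hinv with h | ⟨h, h'⟩
  · refine hd i y' s' h ?_
    rw [setLab_of_ne s]
    · exact hs'
    · rintro rfl; simp [hu₀] at hs'
  · have h1 : G.val i s ≤ G.val i z := hd i u₀ s h (setLab_self u₀ s)
    rcases h' with h' | h'
    · rw [hs'] at h'; cases h'; exact h1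
    · exact (h' s').trans h1

/-- A move to a terminal that is worst for the mover is useless as a deviation from a terminal
equilibrium, so it may be deleted. -/
theorem hasNE_of_delEdge {u₀ y₀ : V} {s : Fin 3} (hy₀ : G.lab y₀ = some s)
    (hmin : ∀ s', G.val (G.own u₀) s ≤ G.val (G.own u₀) s')
    (hne : (G.delEdge u₀ y₀).HasNE) : G.HasNE := by
  obtain ⟨σ, hσ, z, y, hy, hp, hd⟩ := hne
  refine ⟨σ, fun u hu => (hσ u hu).1, z, y, hy, hp, ?_⟩
  intro i y' s' hdev hs'
  have hinv : ReflTransGen ((G.delEdge u₀ y₀).Dev i σ) G.init y' ∨ (y' = y₀ ∧ G.own u₀ = i) := by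
    clear hs'
    induction hdev with
    | refl => exact .inl .refl
    | @tail a b _ hab ih =>
      obtain ⟨h1, h2, h3⟩ := hab
      rcases ih with ih | ⟨rfl, -⟩
      · by_cases h : a = u₀ ∧ b = y₀
        · rcases h3 with h3 | h3
          · exact .inr ⟨h.2, h.1 ▸ h3⟩
          · exact absurd (h3 ▸ h) (hσ a h1).2
        · exact .inl (ih.tail ⟨h1, ⟨h2, h⟩, h3⟩)
      · simp [h1] at hy₀
  rcases hinv with h | ⟨rfl, rfl⟩
  · exact hd i y' s' h hs'
  · rw [hs'] at hy₀; cases hy₀; exact hmin z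

/-- If deleting the move makes all terminals unreachable, then `y₀` is the only terminal that was
reachable. -/
theorem hasNE_of_delEdge_not_canEnd {u₀ y₀ : V} {s : Fin 3} (hG : G.Live) (hE : G.CanEnd)
    (hy₀ : G.lab y₀ = some s) (hne : ¬ (G.delEdge u₀ y₀).CanEnd) : G.HasNE := by
  refine hasNE_of_unique hG hE s fun y s' hp hs' => ?_
  have hinv : ReflTransGen (G.delEdge u₀ y₀).Move G.init y ∨ y = y₀ := by
    clear hs'
    induction hp with
    | refl => exact .inl .refl
    | @tail a b _ hab ih =>
      obtain ⟨h1, h2⟩ := hab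
      rcases ih with ih | rfl
      · by_cases h : a = u₀ ∧ b = y₀
        · exact .inr h.2
        · exact .inl (ih.tail ⟨h1, h2, h⟩)
      · simp [h1] at hy₀
  rcases hinv with h | rfl
  · exact absurd ⟨y, by simp [delEdge, hs'], h⟩ hne
  · rw [hs'] at hy₀; cases hy₀; rfl

/-- A worst label `a` and a middle label `b` of a valuation of three labels, ties allowed. -/
theorem exists_worst_mid (ρ : Fin 3 → ℕ) : ∃ a b : Fin 3, (∀ s, s ≠ a → ρ b ≤ ρ s) ∧
    ∀ s, s = b ∨ (∀ s', ρ s ≤ ρ s') ∨ ∀ s', ρ s' ≤ ρ s := by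
  obtain ⟨a, -, ha⟩ := Finset.exists_min_image Finset.univ ρ ⟨0, Finset.mem_univ _⟩
  obtain ⟨b, hb, hb'⟩ := Finset.exists_min_image (Finset.univ.erase a) ρ
    ⟨a + 1, by simp⟩
  refine ⟨a, b, fun s hs => hb' s (by simp [hs]), fun s => ?_⟩
  by_cases h1 : s = b
  · exact .inl h1
  by_cases h2 : s = a
  · subst h2; exact .inr (.inl fun s' => ha s' (Finset.mem_univ _))
  refine .inr (.inr fun s' => ?_)
  by_cases h3 : s' = a
  · subst h3; exact ha s (Finset.mem_univ _)
  by_cases h4 : s' = b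
  · subst h4; exact hb' s (by simp [h2])
  have hab : b ≠ a := (Finset.mem_erase.1 hb).1
  have : s' = s := by omega
  rw [this]

theorem hasNE_of_edges [Finite V] (n : ℕ) : ∀ G : LabelledGame V ι,
    {p : V × V | G.Move p.1 p.2}.ncard = n → G.Live → G.CanEnd → G.HasNE := by
  induction n using Nat.strong_induction_on with
  | _ n ih =>
    rintro G rfl hG hE
    have hset : ∀ u₀ y₀ s, G.lab u₀ = none → G.adj u₀ y₀ → G.lab y₀ = some s →
        (∀ v, G.adj u₀ v → G.lab v = some s ∨
          ∀ s', G.val (G.own u₀) s' ≤ G.val (G.own u₀) s) → G.HasNE := by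
      intro u₀ y₀ s h1 h2 h3 h4
      refine hasNE_of_setLab h1 h2 h3 h4 (ih _ ?_ _ rfl (hG.setLab u₀ s) (hE.setLab u₀ s))
      refine Set.ncard_lt_ncard ⟨fun p hp => ⟨(setLab_none hp.1).2, hp.2⟩, fun hsub => ?_⟩
        (Set.toFinite _)
      exact (setLab_none (@hsub (u₀, y₀) ⟨h1, h2⟩).1).1 rfl
    have hdel : ∀ u₀ y₀ s, G.lab u₀ = none → G.adj u₀ y₀ → G.lab y₀ = some s →
        (∀ s', G.val (G.own u₀) s ≤ G.val (G.own u₀) s') → (∃ v, G.adj u₀ v ∧ v ≠ y₀) →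
        G.HasNE := by
      intro u₀ y₀ s h1 h2 h3 h4 h5
      by_cases hE' : (G.delEdge u₀ y₀).CanEnd
      · refine hasNE_of_delEdge h3 h4 (ih _ ?_ _ rfl ?_ hE')
        · refine Set.ncard_lt_ncard ⟨fun p hp => ⟨hp.1, hp.2.1⟩, fun hsub => ?_⟩ (Set.toFinite _)
          exact (@hsub (u₀, y₀) ⟨h1, h2⟩).2.2 ⟨rfl, rfl⟩
        · intro u hu
          by_cases h : u = u₀
          · obtain ⟨v, hv, hv'⟩ := h5
            exact ⟨v, h ▸ hv, fun h => hv' h.2⟩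
          · obtain ⟨v, hv⟩ := hG u hu
            exact ⟨v, hv, fun h' => h h'.1⟩
      · exact hasNE_of_delEdge_not_canEnd hG hE h3 hE'
    by_contra hcon
    choose w m hm hs using fun i => exists_worst_mid (G.val i)
    have hmid : ∀ u v s, G.lab u = none → G.adj u v → G.lab v = some s → s = m (G.own u) := by
      intro u v s hu ha hv
      rcases hs (G.own u) s with h | h | h
      · exact h
      · by_cases h5 : ∃ v', G.adj u v' ∧ v' ≠ v
        · exact absurd (hdel u v s hu ha hv h h5) hcon
        · push Not at h5
          exact absurd (hset u v s hu ha hv fun v' hv' => .inl (h5 v' hv' ▸ hv)) hcon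
      · exact absurd (hset u v s hu ha hv fun _ _ => .inr h) hcon
    refine hcon (hasNE_of_reduced hm ⟨fun u hu => ?_, hmid⟩ hE)
    by_contra hno
    push Not at hno
    have hall : ∀ v, G.adj u v → G.lab v = some (m (G.own u)) := by
      intro v hv
      obtain ⟨s, hs⟩ := Option.ne_none_iff_exists'.1 (hno v hv)
      rw [hs, hmid u v s hu hv hs]
    obtain ⟨v, hv⟩ := hG u hu
    exact hcon (hset u v _ hu hv (hall v hv) fun v' hv' => .inl (hall v' hv'))

end LabelledGame

/-! ### Transfer to deterministic graphical games -/

namespace DGGame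

variable {V ι : Type*} (Γ : DGGame V ι)

theorem iter_succ' (σ : V → V) (n : ℕ) : Γ.iter σ (n + 1) = Γ.step σ (Γ.iter σ n) :=
  Function.iterate_succ_apply' _ _ _

theorem iter_eq_of_terminal (σ : V → V) {n : ℕ} (h : Γ.Terminal (Γ.iter σ n)) (k : ℕ) :
    Γ.iter σ (n + k) = Γ.iter σ n := by
  induction k with
  | zero => rfl
  | succ k ih => rw [← Nat.add_assoc, iter_succ', ih, step, if_pos h]

theorem outcome_eq_some (σ : V → V) {n : ℕ} (h : Γ.Terminal (Γ.iter σ n)) :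
    Γ.outcome σ = some (Γ.iter σ n) := by
  have hex : ∃ n, Γ.Terminal (Γ.iter σ n) := ⟨n, h⟩
  obtain ⟨k, hk⟩ := Nat.exists_eq_add_of_le (Nat.find_min' hex h)
  rw [outcome, dif_pos hex, hk, Γ.iter_eq_of_terminal σ (Nat.find_spec hex)]

theorem outcome_cases (σ : V → V) :
    Γ.outcome σ = none ∨ ∃ n, Γ.Terminal (Γ.iter σ n) ∧ Γ.outcome σ = some (Γ.iter σ n) := by
  by_cases h : ∃ n, Γ.Terminal (Γ.iter σ n)
  · obtain ⟨n, hn⟩ := h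
    exact .inr ⟨n, hn, Γ.outcome_eq_some σ hn⟩
  · exact .inl (dif_neg h)

/-- The labelled game of `Γ`, for a numbering `e` of the terminals: the value of the label of a
terminal is the number of terminals that are worse; a label not in use has value `0`. -/
noncomputable def toLabelled (e : V → Fin 3) : LabelledGame V ι where
  adj := Γ.adj
  lab u := if Γ.Terminal u then some (e u) else none
  own := Γ.owner
  val i k := {s | Γ.Terminal s ∧ ∃ t, Γ.Terminal t ∧ e t = k ∧ Γ.pref i (some t) (some s)}.ncard
  init := Γ.init

theorem toLabelled_lab_none {e : V → Fin 3} {u : V} :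
    (Γ.toLabelled e).lab u = none ↔ ¬ Γ.Terminal u := by
  simp [toLabelled]

theorem toLabelled_val_lt [Finite V] (hpref : Γ.PrefOrder) {e : V → Fin 3}
    (he : Set.InjOn e {x | Γ.Terminal x}) {i : ι} {s t : V} (hs : Γ.Terminal s)
    (ht : Γ.Terminal t) (h : Γ.pref i (some t) (some s)) :
    (Γ.toLabelled e).val i (e s) < (Γ.toLabelled e).val i (e t) := by
  have hmem : ∀ {x}, Γ.Terminal x → some x ∈ Γ.OutcomeSet := fun hx => .inr ⟨_, hx, rfl⟩
  obtain ⟨hirr, htr, -⟩ := hpref i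
  refine Set.ncard_lt_ncard ⟨?_, fun hsub => ?_⟩ (Set.toFinite _)
  · rintro q ⟨hq, t', ht', het, hp⟩
    rw [he ht' hs het] at hp
    exact ⟨hq, t, ht, rfl, htr _ (hmem ht) _ (hmem hs) _ (hmem hq) h hp⟩
  · obtain ⟨-, t', ht', het, hp⟩ := hsub ⟨hs, t, ht, rfl, h⟩
    rw [he ht' hs het] at hp
    exact hirr _ (hmem hs) hp

theorem exists_iter_eq {e : V → Fin 3} {σ : V → V} {y : V}
    (h : ReflTransGen ((Γ.toLabelled e).Play σ) Γ.init y) : ∃ n, Γ.iter σ n = y := by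
  induction h with
  | refl => exact ⟨0, rfl⟩
  | tail _ hab ih =>
    obtain ⟨n, hn⟩ := ih
    refine ⟨n + 1, ?_⟩
    rw [iter_succ', hn, step, if_neg (Γ.toLabelled_lab_none.1 hab.1), hab.2]

theorem dev_iter {e : V → Fin 3} {σ σ' : V → V} {i : ι} (hσ' : Γ.IsSituation σ')
    (h : ∀ x, Γ.owner x ≠ i → σ' x = σ x) (n : ℕ) :
    ReflTransGen ((Γ.toLabelled e).Dev i σ) Γ.init (Γ.iter σ' n) := by
  induction n with
  | zero => exact .refl
  | succ n ih =>
    rw [iter_succ', step]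
    split_ifs with ht
    · exact ih
    · refine ih.tail ⟨Γ.toLabelled_lab_none.2 ht, hσ' _ ht, ?_⟩
      by_cases ho : Γ.owner (Γ.iter σ' n) = i
      · exact .inl ho
      · exact .inr (h _ ho)

end DGGame

/-- Every terminal DG game with at most 3 terminals, in which some terminal is
reachable from the initial position by a directed path, has a terminal Nash
equilibrium. -/
theorem stmt1 {V ι : Type*} [Finite V] (Γ : DGGame V ι)
    (hinit : ¬ Γ.Terminal Γ.init) (hpref : Γ.PrefOrder)
    (hterm : Γ.TerminalGame)
    (hT3 : {x | Γ.Terminal x}.ncard ≤ 3)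
    (hreach : ∃ t, Γ.Terminal t ∧ Γ.Reaches Γ.init t) :
    ∃ σ : V → V, Γ.IsTerminalNE σ := by
  obtain ⟨e, he⟩ : ∃ e : V → Fin 3, Set.InjOn e {x | Γ.Terminal x} := by
    have := Fintype.ofFinite {x | Γ.Terminal x}
    have hle : Fintype.card {x | Γ.Terminal x} ≤ Fintype.card (Fin 3) := by
      rw [← Nat.card_eq_fintype_card, Nat.card_coe_set_eq]
      simpa using hT3
    obtain ⟨g⟩ := Function.Embedding.nonempty_of_card_le hle
    refine ⟨fun x => if h : Γ.Terminal x then g ⟨x, h⟩ else 0, fun x hx y hy hxy => ?_⟩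
    have hx' : Γ.Terminal x := hx
    have hy' : Γ.Terminal y := hy
    simp only [dif_pos hx', dif_pos hy'] at hxy
    exact congrArg Subtype.val (g.injective hxy)
  have hlive : (Γ.toLabelled e).Live := by
    intro u hu
    have := Γ.toLabelled_lab_none.1 hu
    simpa [DGGame.Terminal, DGGame.toLabelled] using this
  have hend : (Γ.toLabelled e).CanEnd := by
    obtain ⟨t, ht, hp⟩ := hreach
    refine ⟨t, fun h => Γ.toLabelled_lab_none.1 h ht, ?_⟩
    refine ReflTransGen.mono (fun a b hab => ?_) _ _ hp
    exact ⟨Γ.toLabelled_lab_none.2 fun h => h b hab, hab⟩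
  obtain ⟨σ, hσ, z, y, hy, hp, hd⟩ := LabelledGame.hasNE_of_edges _ _ rfl hlive hend
  have hyT : Γ.Terminal y := by
    by_contra h
    rw [Γ.toLabelled_lab_none.2 h] at hy
    cases hy
  have hlab : ∀ {x}, Γ.Terminal x → (Γ.toLabelled e).lab x = some (e x) := fun hx => if_pos hx
  obtain rfl : e y = z := by
    rw [hlab hyT] at hy
    exact Option.some.inj hy
  have hout : Γ.outcome σ = some y := by
    obtain ⟨n, rfl⟩ := Γ.exists_iter_eq hp
    exact Γ.outcome_eq_some σ hyT
  refine ⟨σ, ⟨fun x hx => hσ x (Γ.toLabelled_lab_none.2 hx), ?_⟩, y, hout⟩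
  intro i σ' hσ' hdev hbetter
  rw [hout] at hbetter
  rcases Γ.outcome_cases σ' with h | ⟨n, hn, h⟩
  · rw [h] at hbetter
    obtain ⟨hirr, htr, -⟩ := hpref i
    have hyO : some y ∈ Γ.OutcomeSet := .inr ⟨y, hyT, rfl⟩
    exact hirr _ (.inl rfl) (htr none (.inl rfl) _ hyO none (.inl rfl) hbetter (hterm i y hyT))
  · rw [h] at hbetter
    have h1 := hd i _ _ (Γ.dev_iter hσ' hdev n) (hlab hn)
    exact absurd (Γ.toLabelled_val_lt hpref he hyT hn hbetter) (not_lt.2 h1)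
end

section
/- Every play-once deterministic graphical game has a Nash equilibrium (in pure stationary strategies). -/
/-!
The proof is a backward induction on a maximal acyclic set of moves, followed by a redirection of
the positions off the play. Since each player owns one position, a deviation changes one move.

*Terminating positions.* Let `W` be the set of positions from which every walk is finite
(accessibility for the move relation). Backward induction gives them values. A position outside
`W` is a *leaver* if it has a move into `W` whose value its owner strictly prefers to `∞`. Forbid
leavers all moves except those into `W` (relation `Base`), and let `D` be the set of positions
from which every walk using the remaining moves is finite.

*Initial position outside `D`.* Every position outside `D` can stay outside `D`, and every position
outside `W` can stay outside `W`. If they all do so, the outcome is `∞`; a deviation leads either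
to `∞` again or into `W`, and the latter is no improvement because no position outside `D` is a
leaver (`exists_NE_of_not_mem`).

*Initial position in `D`.* Extend the moves of `Base` inside `D` to a maximal acyclic set `H` of
moves inside `D`. By maximality, a move `v → u` inside `D` that is missing from `H` has an
`H`-path from `u` back to `v`, and only leavers miss moves. Take the backward induction solution
on `H`, with its play `P`. Redirect each position off `P` that can reach `P` along `H` so
that it moves towards `P`. Let `v` on `P` deviate to `u`. If `u` cannot reach `P` along `H`, then
`v → u` is in `H` and leads to the backward induction value of `u`, so it is no improvement. If it
can, the deviation leads back to `P`, so the outcome is unchanged or `∞`; and `∞` requires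
`v → u` to be missing from `H` (as `H` is acyclic), so `v` is a leaver, whose value under backward
induction is better than `∞`. Leaving `D` is also possible only for leavers, and gives `∞`
(`exists_NE_of_mem`).
-/

open Classical

namespace DGGame

variable {V ι : Type*} {Γ : DGGame V ι}

/-! ### Outcome from an arbitrary position -/

/-- The outcome of the play of `σ` that starts at `v` instead of the initial position. -/
noncomputable def res (Γ : DGGame V ι) (σ : V → V) (v : V) : Option V :=
  if h : ∃ n, Γ.Terminal ((Γ.step σ)^[n] v) then some ((Γ.step σ)^[Nat.find h] v) else none

lemma outcome_eq_res (σ : V → V) : Γ.outcome σ = Γ.res σ Γ.init := rfl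

lemma step_terminal (σ : V → V) {v : V} (h : Γ.Terminal v) : Γ.step σ v = v := if_pos h

lemma step_of_not (σ : V → V) {v : V} (h : ¬ Γ.Terminal v) : Γ.step σ v = σ v := if_neg h

lemma iterate_terminal (σ : V → V) {v : V} (h : Γ.Terminal v) (n : ℕ) :
    (Γ.step σ)^[n] v = v :=
  Function.iterate_fixed (step_terminal σ h) n

lemma res_eq_some {σ : V → V} {v : V} (n : ℕ) (h : Γ.Terminal ((Γ.step σ)^[n] v)) :
    Γ.res σ v = some ((Γ.step σ)^[n] v) := by
  have hex : ∃ n, Γ.Terminal ((Γ.step σ)^[n] v) := ⟨n, h⟩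
  rw [res, dif_pos hex]
  have hle := Nat.find_min' hex h
  obtain ⟨k, hk⟩ := Nat.exists_eq_add_of_le' hle
  conv_rhs => rw [hk, Function.iterate_add_apply, iterate_terminal σ (Nat.find_spec hex)]

lemma res_eq_none {σ : V → V} {v : V} (h : ∀ n, ¬ Γ.Terminal ((Γ.step σ)^[n] v)) :
    Γ.res σ v = none := by
  rw [res, dif_neg]
  push Not
  exact h

lemma res_terminal {σ : V → V} {v : V} (h : Γ.Terminal v) : Γ.res σ v = some v :=
  res_eq_some 0 h

lemma res_step (σ : V → V) (v : V) : Γ.res σ (Γ.step σ v) = Γ.res σ v := by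
  by_cases h : ∃ n, Γ.Terminal ((Γ.step σ)^[n] (Γ.step σ v))
  · obtain ⟨n, hn⟩ := h
    rw [res_eq_some n hn]
    exact (res_eq_some (n + 1) hn).symm
  · push Not at h
    rw [res_eq_none h, res_eq_none]
    rintro (_ | n) hn
    · have hv : Γ.Terminal v := hn
      refine h 0 ?_
      rw [step_terminal σ hv]
      exact hn
    · exact h n hn

lemma res_iterate (σ : V → V) (v : V) (n : ℕ) : Γ.res σ ((Γ.step σ)^[n] v) = Γ.res σ v := by
  induction n with
  | zero => rfl
  | succ n ih => rw [Function.iterate_succ_apply', res_step, ih]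

lemma res_mem (σ : V → V) (v : V) : Γ.res σ v ∈ Γ.OutcomeSet := by
  unfold res
  split_ifs with h
  · exact Or.inr ⟨_, Nat.find_spec h, rfl⟩
  · exact Or.inl rfl

lemma res_eq_none_of_invariant {σ : V → V} (S : V → Prop) (hS : ∀ v, S v → ¬ Γ.Terminal v)
    (hσ : ∀ v, S v → S (σ v)) {v : V} (hv : S v) : Γ.res σ v = none := by
  have key : ∀ n, S ((Γ.step σ)^[n] v) := by
    intro n
    induction n with
    | zero => exact hv
    | succ n ih =>
      rw [Function.iterate_succ_apply', step_of_not σ (hS _ ih)]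
      exact hσ _ ih
  exact res_eq_none fun n => hS _ (key n)

/-- As long as the play of `σ` from `u` avoids the position `v` where `σ'` differs, both
situations give the same play. -/
lemma iterate_congr {σ σ' : V → V} {v : V}
    (hσ : ∀ x, ¬ Γ.Terminal x → x ≠ v → σ' x = σ x) (u : V) (n : ℕ)
    (h : ∀ m < n, (Γ.step σ)^[m] u ≠ v) : (Γ.step σ')^[n] u = (Γ.step σ)^[n] u := by
  induction n with
  | zero => rfl
  | succ n ih =>
    rw [Function.iterate_succ_apply', Function.iterate_succ_apply',
      ih fun m hm => h m (Nat.lt_succ_of_lt hm)]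
    by_cases ht : Γ.Terminal ((Γ.step σ)^[n] u)
    · rw [step_terminal _ ht, step_terminal _ ht]
    · rw [step_of_not _ ht, step_of_not _ ht, hσ _ ht (h n (Nat.lt_succ_self n))]

lemma res_congr {σ σ' : V → V} {v : V}
    (hσ : ∀ x, ¬ Γ.Terminal x → x ≠ v → σ' x = σ x) (u : V)
    (h : ∀ m, (Γ.step σ)^[m] u ≠ v) : Γ.res σ' u = Γ.res σ u := by
  have key : ∀ n, (Γ.step σ')^[n] u = (Γ.step σ)^[n] u := fun n =>
    iterate_congr hσ u n fun m _ => h m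
  simp only [res, key]

/-- The play of `σ'` from `u` reaches `v` if the play of `σ` does. -/
lemma exists_hit {σ σ' : V → V} {v : V}
    (hσ : ∀ x, ¬ Γ.Terminal x → x ≠ v → σ' x = σ x) (u : V)
    (h : ∃ m, (Γ.step σ)^[m] u = v) : ∃ m, (Γ.step σ')^[m] u = v := by
  refine ⟨Nat.find h, ?_⟩
  rw [iterate_congr hσ u _ fun m hm => Nat.find_min h hm]
  exact Nat.find_spec h

/-- If the move at `v` leads to `u` and the play from `u` returns to `v`, the play is infinite. -/
lemma res_eq_none_of_cycle {σ : V → V} {v : V} (hv : ¬ Γ.Terminal v)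
    (h : ∃ m, (Γ.step σ)^[m] (σ v) = v) : Γ.res σ v = none := by
  obtain ⟨m, hm⟩ := h
  rw [← step_of_not σ hv, ← Function.iterate_succ_apply] at hm
  refine res_eq_none fun n hn => hv ?_
  -- A terminal reached after `n` steps is still the position after `(m + 1) * n ≥ n` steps.
  have h1 : (Γ.step σ)^[(m + 1) * n] v = v := by
    rw [Function.iterate_mul]
    exact Function.iterate_fixed hm n
  have h2 : (m + 1) * n = m * n + n := by ring
  rw [h2, Function.iterate_add_apply, iterate_terminal σ hn] at h1
  rw [h1] at hn
  exact hn

/-- The possible outcomes of a deviation at the single position `v`. -/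
lemma outcome_deviation {σ σ' : V → V} {v : V} (hv : ¬ Γ.Terminal v)
    (hσ : ∀ x, ¬ Γ.Terminal x → x ≠ v → σ' x = σ x) :
    Γ.outcome σ' = Γ.outcome σ ∨
    (∃ k, (Γ.step σ)^[k] Γ.init = v) ∧
      ((Γ.outcome σ' = none ∧ ∃ n, (Γ.step σ)^[n] (σ' v) = v) ∨
        Γ.outcome σ' = Γ.res σ (σ' v)) := by
  by_cases hk : ∃ k, (Γ.step σ)^[k] Γ.init = v
  · right
    refine ⟨hk, ?_⟩
    obtain ⟨k, hk'⟩ := exists_hit hσ _ hk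
    have h1 : Γ.outcome σ' = Γ.res σ' v := by
      rw [outcome_eq_res, ← hk', res_iterate]
    rw [h1]
    by_cases hn : ∃ n, (Γ.step σ)^[n] (σ' v) = v
    · exact Or.inl ⟨res_eq_none_of_cycle hv (exists_hit hσ _ hn), hn⟩
    · right
      push Not at hn
      rw [← res_step, step_of_not σ' hv, res_congr hσ _ hn]
  · left
    push Not at hk
    rw [outcome_eq_res, outcome_eq_res, res_congr hσ _ hk]

/-- In a play-once game it suffices to consider deviations at a single position. -/
lemma isNE_of_single (hpo : Γ.PlayOnce) (hpref : Γ.PrefOrder) {σ : V → V}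
    (hs : Γ.IsSituation σ)
    (h : ∀ v u, ¬ Γ.Terminal v → Γ.adj v u → (∃ k, (Γ.step σ)^[k] Γ.init = v) →
      (¬ Γ.pref (Γ.owner v) (Γ.res σ u) (Γ.outcome σ)) ∧
      ((∃ n, (Γ.step σ)^[n] u = v) → ¬ Γ.pref (Γ.owner v) none (Γ.outcome σ))) :
    Γ.IsNE σ := by
  refine ⟨hs, fun i σ' hs' hσ' => ?_⟩
  obtain ⟨v, hv⟩ := Set.ncard_eq_one.1 (hpo i)
  have hvm : v ∈ {x | ¬ Γ.Terminal x ∧ Γ.owner x = i} := by rw [hv]; rfl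
  obtain ⟨hvt, rfl⟩ := hvm
  have hσ : ∀ x, ¬ Γ.Terminal x → x ≠ v → σ' x = σ x := by
    intro x hx hxv
    refine hσ' x fun ho => hxv ?_
    have hxm : x ∈ {x | ¬ Γ.Terminal x ∧ Γ.owner x = Γ.owner v} := ⟨hx, ho⟩
    rw [hv] at hxm
    exact hxm
  rcases outcome_deviation hvt hσ with h1 | ⟨hk, ⟨h1, hn⟩ | h1⟩
  · rw [h1]
    exact (hpref _).1 _ (res_mem σ _)
  · rw [h1]
    exact (h v _ hvt (hs' v hvt) hk).2 hn
  · rw [h1]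
    exact (h v _ hvt (hs' v hvt) hk).1

/-! ### Backward induction -/

lemma exists_best [Finite V] (hpref : Γ.PrefOrder) (i : ι) (s : Set (Option V))
    (hs : s ⊆ Γ.OutcomeSet) (hne : s.Nonempty) : ∃ a ∈ s, ∀ b ∈ s, ¬ Γ.pref i b a := by
  let r : Γ.OutcomeSet → Γ.OutcomeSet → Prop := fun x y => Γ.pref i x.1 y.1
  have : IsTrans _ r := ⟨fun a b c => (hpref i).2.1 _ a.2 _ b.2 _ c.2⟩
  have : Std.Irrefl r := ⟨fun a => (hpref i).1 _ a.2⟩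
  have hwf : WellFounded r := Finite.wellFounded_of_trans_of_irrefl r
  obtain ⟨x, hx⟩ := hne
  obtain ⟨m, hm, hmin⟩ := hwf.has_min (Subtype.val ⁻¹' s) ⟨⟨x, hs hx⟩, hx⟩
  exact ⟨m.1, hm, fun b hb => hmin ⟨b, hs hb⟩ hb⟩

/-- `τ` and `val` solve the game restricted to the moves in `r` by backward induction. Positions
without a move in `r` are not constrained, except that terminals have themselves as value. -/
structure IsBI (Γ : DGGame V ι) (r : V → V → Prop) (τ : V → V) (val : V → Option V) : Prop where
  mem : ∀ v, val v ∈ Γ.OutcomeSet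
  term : ∀ v, Γ.Terminal v → val v = some v
  move : ∀ v, (∃ w, r v w) → r v (τ v)
  val_eq : ∀ v, (∃ w, r v w) → val v = val (τ v)
  best : ∀ v w, r v w → ¬ Γ.pref (Γ.owner v) (val w) (val v)

lemma exists_isBI [Finite V] (hpref : Γ.PrefOrder) {r : V → V → Prop}
    (hwf : WellFounded fun w v => r v w) (hr : ∀ v w, r v w → Γ.adj v w) :
    ∃ τ val, IsBI Γ r τ val := by
  let pick (v : V) (s : Set (Option V)) : Option V :=
    if h : ∃ a ∈ s, ∀ b ∈ s, ¬ Γ.pref (Γ.owner v) b a then h.choose else none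
  let val : V → Option V := hwf.fix fun v ih =>
    if ∃ w, r v w then pick v {o | ∃ w, ∃ h : r v w, o = ih w h}
    else if Γ.Terminal v then some v else none
  have hval : ∀ v, val v = if ∃ w, r v w then pick v {o | ∃ w, ∃ _ : r v w, o = val w}
      else if Γ.Terminal v then some v else none := fun v => hwf.fix_eq _ v
  have hpick : ∀ v s, s ⊆ Γ.OutcomeSet → s.Nonempty →
      pick v s ∈ s ∧ ∀ b ∈ s, ¬ Γ.pref (Γ.owner v) b (pick v s) := by
    intro v s hs hne
    have h := exists_best hpref (Γ.owner v) s hs hne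
    simp only [pick, dif_pos h]
    exact h.choose_spec
  have hmem : ∀ v, val v ∈ Γ.OutcomeSet := by
    intro v
    induction v using hwf.induction with
    | _ v ih =>
      rw [hval]
      split_ifs with h1 h2
      · have hs : {o | ∃ w, ∃ _ : r v w, o = val w} ⊆ Γ.OutcomeSet := by
          rintro o ⟨w, hw, rfl⟩
          exact ih w hw
        obtain ⟨w, hw⟩ := h1
        exact hs (hpick v _ hs ⟨_, w, hw, rfl⟩).1
      · exact Or.inr ⟨v, h2, rfl⟩
      · exact Or.inl rfl
  have hspec : ∀ v, (∃ w, r v w) →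
      (∃ w, r v w ∧ val v = val w) ∧ ∀ w, r v w → ¬ Γ.pref (Γ.owner v) (val w) (val v) := by
    intro v hv
    have hs : {o | ∃ w, ∃ _ : r v w, o = val w} ⊆ Γ.OutcomeSet := by
      rintro o ⟨w, hw, rfl⟩
      exact hmem w
    obtain ⟨w, hw⟩ := id hv
    have h := hpick v _ hs ⟨_, w, hw, rfl⟩
    have hv' := hval v
    rw [if_pos hv] at hv'
    rw [← hv'] at h
    obtain ⟨⟨x, hx, hx'⟩, h2⟩ := h
    exact ⟨⟨x, hx, hx'⟩, fun y hy => h2 _ ⟨y, hy, rfl⟩⟩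
  refine ⟨fun v => if h : ∃ w, r v w ∧ val v = val w then h.choose else v, val, hmem, ?_, ?_, ?_, ?_⟩
  · intro v hv
    rw [hval, if_neg, if_pos hv]
    rintro ⟨w, hw⟩
    exact hv w (hr v w hw)
  · intro v hv
    have h := (hspec v hv).1
    simp only [dif_pos h]
    exact h.choose_spec.1
  · intro v hv
    have h := (hspec v hv).1
    simp only [dif_pos h]
    exact h.choose_spec.2
  · intro v w hw
    exact (hspec v ⟨w, hw⟩).2 w hw

/-! ### Terminating positions, leavers and the base moves -/

/-- `v` is terminating: all walks from `v` are finite. -/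
def Term (Γ : DGGame V ι) (v : V) : Prop := Acc (fun w v => Γ.adj v w) v

/-- `v` is a leaver with respect to the values `val`: it is not terminating, and its owner
prefers the value of some terminating successor to `∞`. -/
def Leaver (Γ : DGGame V ι) (val : V → Option V) (v : V) : Prop :=
  ¬ Γ.Term v ∧ ∃ w, Γ.Term w ∧ Γ.adj v w ∧ Γ.pref (Γ.owner v) (val w) none

/-- All moves, except that leavers may only move to terminating positions. -/
def Base (Γ : DGGame V ι) (val : V → Option V) (v w : V) : Prop :=
  Γ.adj v w ∧ (Γ.Leaver val v → Γ.Term w)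

/-- All walks from `v` along base moves are finite. -/
def Dom (Γ : DGGame V ι) (val : V → Option V) (v : V) : Prop :=
  Acc (fun w v => Γ.Base val v w) v

lemma Term.next {v w : V} (h : Γ.Term v) (hw : Γ.adj v w) : Γ.Term w := Acc.inv h hw

lemma Term.dom {v : V} (h : Γ.Term v) (val : V → Option V) : Γ.Dom val v :=
  Subrelation.accessible (fun hb => hb.1) h

lemma Leaver.dom {val : V → Option V} {v : V} (h : Γ.Leaver val v) : Γ.Dom val v :=
  Acc.intro _ fun _ hw => (hw.2 h).dom val

lemma Dom.next {val : V → Option V} {v w : V} (h : Γ.Dom val v) (hw : Γ.Base val v w) :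
    Γ.Dom val w := Acc.inv h hw

lemma term_of_terminal {v : V} (h : Γ.Terminal v) : Γ.Term v :=
  Acc.intro _ fun w hw => absurd hw (h w)

lemma exists_not_term {v : V} (h : ¬ Γ.Term v) : ∃ w, Γ.adj v w ∧ ¬ Γ.Term w := by
  by_contra! hc
  exact h (Acc.intro _ fun w hw => hc w hw)

lemma exists_not_dom {val : V → Option V} {v : V} (h : ¬ Γ.Dom val v) :
    ∃ w, Γ.adj v w ∧ ¬ Γ.Dom val w := by
  by_contra! hc
  exact h (Acc.intro _ fun w hw => hc w hw.1)

lemma exists_isBI_term [Finite V] (hpref : Γ.PrefOrder) :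
    ∃ τ val, IsBI Γ (fun v w => Γ.adj v w ∧ Γ.Term v) τ val := by
  refine exists_isBI hpref ⟨fun v => ?_⟩ fun v w h => h.1
  by_cases hv : Γ.Term v
  · exact Subrelation.accessible (fun hb => hb.1) hv
  · exact Acc.intro _ fun w hw => absurd hw.2 hv

/-! ### The infinite equilibrium -/

lemma exists_NE_of_not_mem (hpref : Γ.PrefOrder) (hpo : Γ.PlayOnce)
    {τ : V → V} {val : V → Option V} (hBI : IsBI Γ (fun v w => Γ.adj v w ∧ Γ.Term v) τ val)
    (h0 : ¬ Γ.Dom val Γ.init) : ∃ σ : V → V, Γ.IsNE σ := by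
  have hsel : ∀ v, ∃ w, (¬ Γ.Dom val v → Γ.adj v w ∧ ¬ Γ.Dom val w) ∧
      (¬ Γ.Term v → Γ.adj v w ∧ ¬ Γ.Term w) ∧ (Γ.Term v → w = τ v) := by
    intro v
    by_cases h1 : Γ.Dom val v
    · by_cases h2 : Γ.Term v
      · exact ⟨τ v, fun h => absurd h1 h, fun h => absurd h2 h, fun _ => rfl⟩
      · obtain ⟨w, hw⟩ := exists_not_term h2
        exact ⟨w, fun h => absurd h1 h, fun _ => hw, fun h => absurd h h2⟩
    · obtain ⟨w, hw, hw'⟩ := exists_not_dom h1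
      exact ⟨w, fun _ => ⟨hw, hw'⟩, fun _ => ⟨hw, fun h => hw' (h.dom val)⟩,
        fun h => absurd (h.dom val) h1⟩
  choose σ hσD hσU hσW using hsel
  have hexit : ∀ v, ¬ Γ.Terminal v → Γ.Term v → ∃ w, Γ.adj v w ∧ Γ.Term v := by
    intro v hv hT
    unfold Terminal at hv
    push Not at hv
    obtain ⟨w, hw⟩ := hv
    exact ⟨w, hw, hT⟩
  have hU : ∀ v, ¬ Γ.Term v → Γ.res σ v = none := fun v hv =>
    res_eq_none_of_invariant (fun v => ¬ Γ.Term v) (fun v hv ht => hv (term_of_terminal ht))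
      (fun v hv => (hσU v hv).2) hv
  have hW : ∀ v, Γ.Term v → Γ.res σ v = val v := by
    intro v hv
    induction hv with
    | intro v hacc ih =>
      by_cases ht : Γ.Terminal v
      · rw [res_terminal ht, hBI.term v ht]
      · have hT : Γ.Term v := Acc.intro v hacc
        have hex := hexit v ht hT
        rw [← res_step, step_of_not σ ht, hσW v hT, hBI.val_eq v hex]
        exact ih _ (hBI.move v hex).1
  have hout : Γ.outcome σ = none := hU _ fun h => h0 (h.dom val)
  have hplay : ∀ k, ¬ Γ.Dom val ((Γ.step σ)^[k] Γ.init) := by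
    intro k
    induction k with
    | zero => exact h0
    | succ k ih =>
      rw [Function.iterate_succ_apply',
        step_of_not σ fun ht => ih ((term_of_terminal ht).dom val)]
      exact (hσD _ ih).2
  refine ⟨σ, isNE_of_single hpo hpref ?_ ?_⟩
  · intro v hv
    by_cases hT : Γ.Term v
    · rw [hσW v hT]
      exact (hBI.move v (hexit v hv hT)).1
    · exact (hσU v hT).1
  · rintro v u hv hu ⟨k, hk⟩
    rw [hout]
    have hvD : ¬ Γ.Dom val v := hk ▸ hplay k
    have hirr := (hpref (Γ.owner v)).1 none (Or.inl rfl)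
    refine ⟨?_, fun _ => hirr⟩
    by_cases hT : Γ.Term u
    · rw [hW u hT]
      exact fun hp => hvD (Leaver.dom ⟨fun h => hvD (h.dom val), u, hT, hu, hp⟩)
    · rw [hU u hT]
      exact hirr

/-! ### Maximal acyclic sets of moves -/

lemma transGen_insert {r : V → V → Prop} {x y a b : V}
    (h : Relation.TransGen (fun v w => r v w ∨ (v = x ∧ w = y)) a b) :
    Relation.TransGen r a b ∨ (Relation.ReflTransGen r a x ∧ Relation.ReflTransGen r y b) := by
  induction h with
  | single h =>
    rcases h with h | ⟨rfl, rfl⟩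
    · exact Or.inl (.single h)
    · exact Or.inr ⟨.refl, .refl⟩
  | tail _ h ih =>
    rcases h with h | ⟨rfl, rfl⟩
    · rcases ih with ih | ⟨ih1, ih2⟩
      · exact Or.inl (ih.tail h)
      · exact Or.inr ⟨ih1, ih2.tail h⟩
    · rcases ih with ih | ⟨ih1, ih2⟩
      · exact Or.inr ⟨ih.to_reflTransGen, .refl⟩
      · exact Or.inr ⟨ih1, .refl⟩

/-- An acyclic relation `r ≤ s` extends to a maximal acyclic relation `H ≤ s`; pairs of `s` missing
from `H` close an `H`-cycle. -/
lemma exists_maximal_acyclic [Finite V] {r s : V → V → Prop} (hrs : r ≤ s)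
    (hr : ∀ v, ¬ Relation.TransGen r v v) :
    ∃ H : V → V → Prop, r ≤ H ∧ H ≤ s ∧ (∀ v, ¬ Relation.TransGen H v v) ∧
      ∀ v w, s v w → ¬ H v w → Relation.ReflTransGen H w v := by
  obtain ⟨H, hrH, hmax⟩ := (Set.toFinite
    {H : V → V → Prop | H ≤ s ∧ ∀ v, ¬ Relation.TransGen H v v}).exists_le_maximal
      (a := r) ⟨hrs, hr⟩
  refine ⟨H, hrH, hmax.prop.1, hmax.prop.2, fun v w hs hH => ?_⟩
  by_contra hc
  refine hH (hmax.le_of_ge (y := fun a b => H a b ∨ (a = v ∧ b = w)) ⟨?_, ?_⟩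
    (fun a b h => Or.inl h) v w (Or.inr ⟨rfl, rfl⟩))
  · rintro a b (h | ⟨rfl, rfl⟩)
    · exact hmax.prop.1 a b h
    · exact hs
  · intro a ha
    rcases transGen_insert ha with h | ⟨h1, h2⟩
    · exact hmax.prop.2 a h
    · exact hc (h2.trans h1)

lemma wellFounded_of_acyclic [Finite V] {H : V → V → Prop}
    (hH : ∀ v, ¬ Relation.TransGen H v v) : WellFounded fun w v => H v w := by
  have : IsTrans V fun w v => Relation.TransGen H v w := ⟨fun _ _ _ h1 h2 => h2.trans h1⟩
  have : Std.Irrefl fun w v => Relation.TransGen H v w := ⟨hH⟩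
  exact Subrelation.wf (fun h => Relation.TransGen.single h)
    (Finite.wellFounded_of_trans_of_irrefl fun w v => Relation.TransGen H v w)

lemma acyclic_of_wellFounded {r : V → V → Prop} (h : WellFounded fun w v => r v w) (v : V) :
    ¬ Relation.TransGen r v v := by
  intro hv
  have hswap : Relation.TransGen (fun w v => r v w) v v := Relation.transGen_swap.1 hv
  exact h.transGen.irrefl.irrefl v hswap

/-! ### The terminal equilibrium -/

lemma exists_NE_of_mem [Finite V] (hpref : Γ.PrefOrder) (hpo : Γ.PlayOnce)
    {τ₀ : V → V} {val₀ : V → Option V}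
    (hBI₀ : IsBI Γ (fun v w => Γ.adj v w ∧ Γ.Term v) τ₀ val₀)
    (h0 : Γ.Dom val₀ Γ.init) : ∃ σ : V → V, Γ.IsNE σ := by
  obtain ⟨H, hBH, hHs, hacyc, hmiss⟩ := exists_maximal_acyclic
    (r := fun v w => Γ.Base val₀ v w ∧ Γ.Dom val₀ v)
    (s := fun v w => Γ.adj v w ∧ Γ.Dom val₀ v ∧ Γ.Dom val₀ w)
    (fun v w h => ⟨h.1.1, h.2, h.2.next h.1⟩)
    (acyclic_of_wellFounded ⟨fun v => by
      by_cases hv : Γ.Dom val₀ v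
      · exact Subrelation.accessible (fun hb => hb.1) hv
      · exact Acc.intro _ fun w hw => absurd hw.2 hv⟩)
  have hwf := wellFounded_of_acyclic hacyc
  obtain ⟨τ, val, hBI⟩ := exists_isBI hpref hwf fun v w h => (hHs v w h).1
  -- Only leavers miss moves.
  have hleave : ∀ v u, Γ.Dom val₀ v → Γ.adj v u → ¬ H v u → Γ.Leaver val₀ v := by
    intro v u hv hu hn
    by_contra hl
    exact hn (hBH v u ⟨⟨hu, fun h => absurd h hl⟩, hv⟩)
  have hsucc : ∀ v, Γ.Dom val₀ v → ¬ Γ.Terminal v → ∃ w, H v w := by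
    intro v hv ht
    by_cases hl : Γ.Leaver val₀ v
    · obtain ⟨w, hw, hvw, -⟩ := hl.2
      exact ⟨w, hBH v w ⟨⟨hvw, fun _ => hw⟩, hv⟩⟩
    · unfold Terminal at ht
      push Not at ht
      obtain ⟨w, hw⟩ := ht
      exact ⟨w, hBH v w ⟨⟨hw, fun h => absurd h hl⟩, hv⟩⟩
  -- On terminating positions the two backward inductions agree, preferences being linear.
  have hval : ∀ v, Γ.Term v → val v = val₀ v := by
    intro v hv
    induction hv with
    | intro v hacc ih =>
      have hT : Γ.Term v := Acc.intro v hacc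
      by_cases ht : Γ.Terminal v
      · rw [hBI.term v ht, hBI₀.term v ht]
      · have hex := hsucc v (hT.dom _) ht
        have h1 := hBI.move v hex
        have ha1 := (hHs _ _ h1).1
        have hex₀ : ∃ w, Γ.adj v w ∧ Γ.Term v := ⟨_, ha1, hT⟩
        have h2 := (hBI₀.move v hex₀).1
        by_contra hne
        rcases (hpref (Γ.owner v)).2.2 _ (hBI.mem v) _ (hBI₀.mem v) hne with hp | hp
        · refine hBI₀.best v _ ⟨ha1, hT⟩ ?_
          rw [← ih _ ha1, ← hBI.val_eq v hex]
          exact hp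
        · refine hBI.best v (τ₀ v) (hBH _ _ ⟨⟨h2, fun hl => absurd hT hl.1⟩, hT.dom _⟩) ?_
          rw [ih _ h2, ← hBI₀.val_eq v hex₀]
          exact hp
  have hdislike : ∀ v, Γ.Leaver val₀ v → ¬ Γ.pref (Γ.owner v) none (val v) := by
    intro v hl hp
    obtain ⟨w, hw, hvw, hpw⟩ := hl.2
    refine hBI.best v w (hBH v w ⟨⟨hvw, fun _ => hw⟩, hl.dom⟩) ?_
    rw [← hval w hw] at hpw
    exact (hpref _).2.1 _ (hBI.mem w) _ (Or.inl rfl) _ (hBI.mem v) hpw hp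
  -- `P` is the play of `τ`, `Z` the set of positions that reach it along `H`.
  let P : V → Prop := fun v => ∃ n, (Γ.step τ)^[n] Γ.init = v
  let Z : V → Prop := fun v => ∃ p, P p ∧ Relation.ReflTransGen H v p
  have hPZ : ∀ v, P v → Z v := fun v hv => ⟨v, hv, .refl⟩
  have hPD : ∀ v, P v → Γ.Dom val₀ v := by
    rintro v ⟨n, rfl⟩
    induction n with
    | zero => exact h0
    | succ n ih =>
      rw [Function.iterate_succ_apply']
      by_cases ht : Γ.Terminal ((Γ.step τ)^[n] Γ.init)
      · rw [step_terminal _ ht]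
        exact ih
      · rw [step_of_not _ ht]
        exact (hHs _ _ (hBI.move _ (hsucc _ ih ht))).2.2
  have hPval : ∀ v, P v → val v = val Γ.init := by
    rintro v ⟨n, rfl⟩
    induction n with
    | zero => rfl
    | succ n ih =>
      rw [Function.iterate_succ_apply']
      by_cases ht : Γ.Terminal ((Γ.step τ)^[n] Γ.init)
      · rw [step_terminal _ ht]
        exact ih
      · rw [step_of_not _ ht, ← hBI.val_eq _ (hsucc _ (hPD _ ⟨n, rfl⟩) ht)]
        exact ih
  have hPnext : ∀ v, P v → ¬ Γ.Terminal v → P (τ v) := by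
    rintro v ⟨n, rfl⟩ ht
    exact ⟨n + 1, by rw [Function.iterate_succ_apply', step_of_not _ ht]⟩
  have hsel : ∀ v, ∃ w, ((P v ∨ Γ.Dom val₀ v ∧ ¬ Z v) → w = τ v) ∧
      (¬ P v → Z v → H v w ∧ Z w) ∧ (¬ Γ.Dom val₀ v → Γ.adj v w ∧ ¬ Γ.Dom val₀ w) := by
    intro v
    by_cases hD : Γ.Dom val₀ v
    · by_cases hP : P v
      · exact ⟨τ v, fun _ => rfl, fun h => absurd hP h, fun h => absurd hD h⟩
      · by_cases hZ : Z v
        · obtain ⟨p, hp, hvp⟩ := id hZ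
          rcases Relation.ReflTransGen.cases_head hvp with rfl | ⟨w, hw, hwp⟩
          · exact absurd hp hP
          · exact ⟨w, fun h => absurd hZ (h.resolve_left hP).2, fun _ _ => ⟨hw, p, hp, hwp⟩,
              fun h => absurd hD h⟩
        · exact ⟨τ v, fun _ => rfl, fun _ h => absurd h hZ, fun h => absurd hD h⟩
    · obtain ⟨w, hw⟩ := exists_not_dom hD
      refine ⟨w, fun h => absurd h ?_, fun hP hZ => absurd hD ?_, fun _ => hw⟩
      · rintro (h | h)
        · exact hD (hPD v h)
        · exact hD h.1
      · obtain ⟨p, hp, hvp⟩ := hZ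
        rcases Relation.ReflTransGen.cases_head hvp with rfl | ⟨w, hw, -⟩
        · exact absurd hp hP
        · exact not_not.2 (hHs _ _ hw).2.1
  choose σ hσ1 hσ2 hσN using hsel
  have hσH : ∀ v, Γ.Dom val₀ v → ¬ Γ.Terminal v → H v (σ v) := by
    intro v hv ht
    by_cases h : P v ∨ Γ.Dom val₀ v ∧ ¬ Z v
    · rw [hσ1 v h]
      exact hBI.move v (hsucc v hv ht)
    · exact (hσ2 v (by tauto) (by tauto)).1
  have hreach : ∀ u n, Γ.Dom val₀ u → Relation.ReflTransGen H u ((Γ.step σ)^[n] u) ∧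
      Γ.Dom val₀ ((Γ.step σ)^[n] u) := by
    intro u n hu
    induction n with
    | zero => exact ⟨.refl, hu⟩
    | succ n ih =>
      rw [Function.iterate_succ_apply']
      by_cases ht : Γ.Terminal ((Γ.step σ)^[n] u)
      · rw [step_terminal _ ht]
        exact ih
      · rw [step_of_not _ ht]
        have h := hσH _ ih.2 ht
        exact ⟨ih.1.tail h, (hHs _ _ h).2.2⟩
  have hplay : ∀ n, P ((Γ.step σ)^[n] Γ.init) := by
    intro n
    induction n with
    | zero => exact ⟨0, rfl⟩
    | succ n ih =>
      rw [Function.iterate_succ_apply']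
      by_cases ht : Γ.Terminal ((Γ.step σ)^[n] Γ.init)
      · rw [step_terminal _ ht]
        exact ih
      · rw [step_of_not _ ht, hσ1 _ (Or.inl ih)]
        exact hPnext _ ih ht
  have hresZ : ∀ v, Z v → Γ.res σ v = val Γ.init := by
    intro v
    induction v using hwf.induction with
    | _ v ih =>
      intro hZ
      by_cases hP : P v
      · by_cases ht : Γ.Terminal v
        · rw [res_terminal ht, ← hPval v hP, hBI.term v ht]
        · have hv := hσH v (hPD v hP) ht
          rw [← res_step, step_of_not _ ht]
          refine ih _ hv (hPZ _ ?_)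
          rw [hσ1 v (Or.inl hP)]
          exact hPnext v hP ht
      · have h := hσ2 v hP hZ
        rw [← res_step, step_of_not _ fun ht => ht _ (hHs _ _ h.1).1]
        exact ih _ h.1 h.2
  have hresD : ∀ v, Γ.Dom val₀ v → ¬ Z v → Γ.res σ v = val v := by
    intro v
    induction v using hwf.induction with
    | _ v ih =>
      intro hD hZ
      by_cases ht : Γ.Terminal v
      · rw [res_terminal ht, hBI.term v ht]
      · have hv := hσH v hD ht
        rw [← res_step, step_of_not _ ht, ih _ hv (hHs _ _ hv).2.2, hσ1 v (Or.inr ⟨hD, hZ⟩),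
          ← hBI.val_eq v ⟨_, hv⟩]
        rintro ⟨p, hp, hvp⟩
        exact hZ ⟨p, hp, .head hv hvp⟩
  have hresN : ∀ v, ¬ Γ.Dom val₀ v → Γ.res σ v = none := fun v hv =>
    res_eq_none_of_invariant (fun v => ¬ Γ.Dom val₀ v)
      (fun v hv ht => hv ((term_of_terminal ht).dom _)) (fun v hv => (hσN v hv).2) hv
  have hout : Γ.outcome σ = val Γ.init := hresZ _ (hPZ _ ⟨0, rfl⟩)
  refine ⟨σ, isNE_of_single hpo hpref ?_ ?_⟩
  · intro v hv
    by_cases hD : Γ.Dom val₀ v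
    · exact (hHs _ _ (hσH v hD hv)).1
    · exact (hσN v hD).1
  · rintro v u hv hu ⟨k, hk⟩
    have hPv : P v := hk ▸ hplay k
    have hDv := hPD v hPv
    rw [hout, ← hPval v hPv]
    by_cases hDu : Γ.Dom val₀ u
    · refine ⟨?_, ?_⟩
      · by_cases hZ : Z u
        · rw [hresZ u hZ, ← hPval v hPv]
          exact (hpref _).1 _ (hBI.mem v)
        · rw [hresD u hDu hZ]
          refine hBI.best v u ?_
          by_contra hn
          exact hZ ⟨v, hPv, hmiss v u ⟨hu, hDv, hDu⟩ hn⟩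
      · rintro ⟨n, hn⟩
        -- The return to `v` runs along `H`, so the move `v → u` is missing from `H`.
        have huv : Relation.ReflTransGen H u v := hn ▸ (hreach u n hDu).1
        exact hdislike v (hleave v u hDv hu fun hH => hacyc v (.head' hH huv))
    · have hl := hleave v u hDv hu fun hH => hDu (hHs _ _ hH).2.2
      rw [hresN u hDu]
      exact ⟨hdislike v hl, fun _ => hdislike v hl⟩

end DGGame

/-- Every play-once DG game has a Nash equilibrium (in pure stationary strategies). -/
theorem stmt2 {V ι : Type*} [Finite V] (Γ : DGGame V ι)
    (hinit : ¬ Γ.Terminal Γ.init) (hpref : Γ.PrefOrder)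
    (hpo : Γ.PlayOnce) :
    ∃ σ : V → V, Γ.IsNE σ := by
  obtain ⟨τ, val, hBI⟩ := DGGame.exists_isBI_term hpref
  by_cases h : Γ.Dom val Γ.init
  · exact DGGame.exists_NE_of_mem hpref hpo hBI h
  · exact DGGame.exists_NE_of_not_mem hpref hpo hBI h
end

section
/- Every DG game that is both terminal and play-once has a Nash equilibrium (in pure stationary strategies). -/
/-!
Since every player moves at one position only, a player can gain by deviating only if his position
`u` lies on the play, and then only by one move `u → w` after which the play follows `σ` from `w`
without meeting `u` again. Such a test makes sense for the game restricted to a set `W` of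
positions, where leaving `W` counts as `∞` (`Stable`). The claim proved by induction on `W`
(`exists_stable`): if some terminal can be reached from `x` inside `W`, there is a stable situation
for the game started at `x` whose outcome is a terminal.

Induction step: remove `x` from `W` to get `W'`. Each child `j` of `x` from which a terminal is
reachable in `W'` has a stable situation `σ_j` with a terminal outcome `a_j`. A greedy selection
(`exists_selection`) gives a child `i` such that every such child `j` reaches a target, meaning a
terminal `b` not better than `a_i` for the owner of `x` which is either `a_i` or unreachable
from `i`. Let `x` move to `i`, keep `σ_i` on its play from `i`, let all other positions from which a
target is reachable move along shortest paths to the targets, and keep `σ_i` elsewhere.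
The owner of `x` gains nothing, because all his children lead to targets or to `∞`. A deviation at a
position of the play from `i` either leads to a target reachable from `i`, that is to `a_i`, or
never meets a redirected position, so that stability of `σ_i` applies.
-/

open Classical

namespace DGGame

variable {V ι : Type*} (Γ : DGGame V ι)

/-- `Leads W σ y t`: the play of `σ` started at `y` stays in `W` and ends at the terminal `t`. -/
inductive Leads (W : Set V) (σ : V → V) : V → V → Prop
  | term {t : V} : Γ.Terminal t → t ∈ W → Leads W σ t t
  | move {y t : V} : y ∈ W → ¬ Γ.Terminal y → Leads W σ (σ y) t → Leads W σ y t

/-- `ReachIn W n y t`: there is a directed walk of length `n` from `y` to `t` inside `W`. -/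
inductive ReachIn (W : Set V) : ℕ → V → V → Prop
  | refl {t : V} : t ∈ W → ReachIn W 0 t t
  | cons {n : ℕ} {y z t : V} : y ∈ W → Γ.adj y z → ReachIn W n z t → ReachIn W (n + 1) y t

/-- The position `u` is visited by the play of `σ` started at `y`. -/
def Visits (σ : V → V) (y u : V) : Prop :=
  Relation.ReflTransGen (fun p q => ¬ Γ.Terminal p ∧ q = σ p) y u

/-- The equilibrium condition for the play-once game restricted to `W` and started at `x`: the
play of `σ` ends at the terminal `a`, and no owner of a visited position `u` gains by a single
change of move at `u`. A deviating play which returns to `u` is infinite, so only the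
plays avoiding `u` matter. -/
structure Stable (W : Set V) (x : V) (σ : V → V) (a : V) : Prop where
  sit : Γ.IsSituation σ
  leads : Γ.Leads W σ x a
  noGain : ∀ u, Γ.Visits σ x u → ¬ Γ.Terminal u → ∀ w, Γ.adj u w → ∀ b,
    Γ.Leads (W \ {u}) σ w b → ¬ Γ.pref (Γ.owner u) (some b) (some a)

variable {Γ}

/-! ### Plays -/

lemma Leads.mem {W : Set V} {σ : V → V} {y t : V} (h : Γ.Leads W σ y t) : y ∈ W := by
  cases h <;> assumption

lemma Leads.terminal {W : Set V} {σ : V → V} {y t : V} (h : Γ.Leads W σ y t) :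
    Γ.Terminal t := by
  induction h <;> assumption

lemma Leads.next {W : Set V} {σ : V → V} {y t : V} (h : Γ.Leads W σ y t)
    (hy : ¬ Γ.Terminal y) : Γ.Leads W σ (σ y) t := by
  cases h with
  | term h1 _ => exact absurd h1 hy
  | move _ _ h => exact h

lemma Leads.unique {W W' : Set V} {σ : V → V} {y t s : V} (h : Γ.Leads W σ y t)
    (h' : Γ.Leads W' σ y s) : t = s := by
  induction h with
  | term ht _ =>
    cases h' with
    | term _ _ => rfl
    | move _ h _ => exact absurd ht h
  | move _ hy _ ih => exact ih (h'.next hy)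

lemma Leads.mono {W W' : Set V} {σ : V → V} {y t : V} (h : Γ.Leads W σ y t)
    (hW : W ⊆ W') : Γ.Leads W' σ y t := by
  induction h with
  | term ht hm => exact .term ht (hW hm)
  | move hm hy _ ih => exact .move (hW hm) hy ih

lemma Leads.visits {W : Set V} {σ : V → V} {y t u : V} (h : Γ.Leads W σ y t)
    (hv : Γ.Visits σ y u) : Γ.Leads W σ u t := by
  induction hv using Relation.ReflTransGen.head_induction_on with
  | refl => exact h
  | head hs _ ih =>
    obtain ⟨hn, rfl⟩ := hs
    exact ih (h.next hn)

lemma Leads.reachIn {W : Set V} {σ : V → V} {y t : V} (hσ : Γ.IsSituation σ)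
    (h : Γ.Leads W σ y t) : ∃ n, Γ.ReachIn W n y t := by
  induction h with
  | term _ hm => exact ⟨0, .refl hm⟩
  | move hm hy _ ih =>
    obtain ⟨n, hn⟩ := ih
    exact ⟨n + 1, .cons hm (hσ _ hy) hn⟩

lemma ReachIn.trans {W : Set V} {n m : ℕ} {x y z : V} (h : Γ.ReachIn W n x y)
    (h' : Γ.ReachIn W m y z) : ∃ k, Γ.ReachIn W k x z := by
  induction h with
  | refl _ => exact ⟨m, h'⟩
  | cons hm ha _ ih =>
    obtain ⟨k, hk⟩ := ih h'
    exact ⟨k + 1, .cons hm ha hk⟩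

lemma ReachIn.mem {W : Set V} {n : ℕ} {x y : V} (h : Γ.ReachIn W n x y) : x ∈ W := by
  cases h <;> assumption

/-- A walk ending at a position other than `x` either avoids `x` or avoids it after its last visit. -/
lemma ReachIn.avoid {W : Set V} {n : ℕ} {y t x : V} (h : Γ.ReachIn W n y t) (hxt : x ≠ t) :
    (∃ m, Γ.ReachIn (W \ {x}) m y t) ∨
      ∃ w m, Γ.adj x w ∧ Γ.ReachIn (W \ {x}) m w t := by
  induction h with
  | refl hm => exact .inl ⟨0, .refl ⟨hm, fun h => hxt h.symm⟩⟩
  | @cons n y z t hm ha _ ih =>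
    rcases ih hxt with ⟨m, h⟩ | h
    · by_cases hy : y = x
      · subst hy
        exact .inr ⟨z, m, ha, h⟩
      · exact .inl ⟨m + 1, .cons ⟨hm, hy⟩ ha h⟩
    · exact .inr h

lemma Visits.reachIn {W : Set V} {σ : V → V} {y t u : V} (hσ : Γ.IsSituation σ)
    (h : Γ.Leads W σ y t) (hv : Γ.Visits σ y u) : ∃ n, Γ.ReachIn W n y u := by
  induction hv using Relation.ReflTransGen.head_induction_on with
  | refl => exact ⟨0, .refl h.mem⟩
  | head hs _ ih =>
    obtain ⟨hn, rfl⟩ := hs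
    obtain ⟨n, hn'⟩ := ih (h.next hn)
    exact ⟨n + 1, .cons h.mem (hσ _ hn) hn'⟩

lemma Leads.congr {W : Set V} {σ σ' : V → V} {y t : V} (h : Γ.Leads W σ y t)
    (hs : ∀ u, Γ.Visits σ y u → ¬ Γ.Terminal u → σ' u = σ u) : Γ.Leads W σ' y t := by
  induction h with
  | term ht hm => exact .term ht hm
  | @move y t hm hy _ ih =>
    refine .move hm hy ?_
    rw [hs y .refl hy]
    exact ih fun u hu => hs u (.head ⟨hy, rfl⟩ hu)

lemma Visits.congr {σ σ' : V → V} {y u : V} (h : Γ.Visits σ' y u)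
    (hs : ∀ u, Γ.Visits σ y u → ¬ Γ.Terminal u → σ' u = σ u) : Γ.Visits σ y u := by
  induction h with
  | refl => exact .refl
  | tail _ hq ih =>
    obtain ⟨hn, rfl⟩ := hq
    exact ih.tail ⟨hn, hs _ ih hn⟩

/-- The last visit to `u`, if there is one, is followed by a play avoiding `u`. -/
lemma Leads.avoid {W : Set V} {σ : V → V} {y t u : V} (hu : ¬ Γ.Terminal u)
    (h : Γ.Leads W σ y t) :
    Γ.Leads (W \ {u}) σ y t ∨ Γ.Leads (W \ {u}) σ (σ u) t := by
  induction h with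
  | term ht hm => exact .inl (.term ht ⟨hm, fun h => hu (h ▸ ht)⟩)
  | @move y t hm hy _ ih =>
    rcases ih with ih | ih
    · by_cases h : y = u
      · subst h
        exact .inr ih
      · exact .inl (.move ⟨hm, h⟩ hy ih)
    · exact .inr ih

/-! ### Selecting the child of the starting position -/

/-- If `l` has a worst value in `J`, either every `j ∈ J` reaches `a l` and `l` can be selected,
or the selection is made among those `j` that do not reach `a l`. -/
lemma exists_selection {I A : Type*} (a : I → A) (R : I → A → Prop) (r : A → A → Prop)
    (hR : ∀ i, R i (a i)) (hirr : ∀ i, ¬ r (a i) (a i))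
    (htr : ∀ i j k, r (a i) (a j) → r (a j) (a k) → r (a i) (a k))
    (J : Finset I) (hJ : J.Nonempty) :
    ∃ i ∈ J, ∀ j ∈ J, ∃ l ∈ J, R j (a l) ∧ ¬ r (a l) (a i) ∧ (a l = a i ∨ ¬ R i (a l)) := by
  induction J using Finset.strongInduction with
  | H J ih =>
    obtain ⟨l, hl, hmin⟩ : ∃ l ∈ J, ∀ i ∈ J, ¬ r (a l) (a i) := by
      let q : J → J → Prop := fun i l => r (a l) (a i)
      have : IsTrans J q := ⟨fun i j k h1 h2 => htr _ _ _ h2 h1⟩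
      have : Std.Irrefl q := ⟨fun i => hirr i⟩
      have wf : WellFounded q := Finite.wellFounded_of_trans_of_irrefl q
      obtain ⟨m, -, hm⟩ := wf.has_min Set.univ ⟨⟨hJ.choose, hJ.choose_spec⟩, trivial⟩
      exact ⟨m, m.2, fun i hi => hm ⟨i, hi⟩ trivial⟩
    by_cases hne : (J.filter fun j => ¬ R j (a l)).Nonempty
    · obtain ⟨i, hi, H⟩ := ih (J.filter fun j => ¬ R j (a l))
        (Finset.filter_ssubset.2 ⟨l, hl, by simpa using hR l⟩) hne
      rw [Finset.mem_filter] at hi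
      refine ⟨i, hi.1, fun j hj => ?_⟩
      by_cases hjl : R j (a l)
      · exact ⟨l, hl, hjl, hmin i hi.1, .inr hi.2⟩
      · obtain ⟨l', hl', h⟩ := H j (Finset.mem_filter.2 ⟨hj, hjl⟩)
        exact ⟨l', (Finset.mem_filter.1 hl').1, h⟩
    · refine ⟨l, hl, fun j hj => ⟨l, hl, ?_, hirr l, .inl rfl⟩⟩
      by_contra h
      exact hne ⟨j, Finset.mem_filter.2 ⟨hj, h⟩⟩

/-! ### Redirecting towards a set of targets -/

/-- Outside the play of `τ` from `i`, every position of `W` from which a target in `B` is reachable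
can be redirected so that its play ends in `B`; other positions keep the move of `τ`. -/
lemma exists_redirect {W : Set V} {τ : V → V} {i a : V} (hτ : Γ.IsSituation τ)
    (hl : Γ.Leads W τ i a) (B : Set V) (hB : ∀ b ∈ B, Γ.Terminal b) (haB : a ∈ B) :
    ∃ σ, Γ.IsSituation σ ∧ (∀ y, Γ.Visits τ i y → σ y = τ y) ∧
      (∀ y, (¬ ∃ b ∈ B, ∃ n, Γ.ReachIn W n y b) → σ y = τ y) ∧
      (∀ y, (∃ b ∈ B, ∃ n, Γ.ReachIn W n y b) → ∃ b ∈ B, Γ.Leads W σ y b) := by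
  -- `d y n` says that a target is reachable from `y` in `n` moves.
  let d : V → ℕ → Prop := fun y n => ∃ b ∈ B, Γ.ReachIn W n y b
  have hnext : ∀ y, ¬ Γ.Terminal y → (∃ n, d y n) →
      ∃ z, Γ.adj y z ∧ ∀ n, d y n → ∃ m < n, d z m := by
    intro y hy h
    obtain ⟨b, hb, hr⟩ := Nat.find_spec h
    generalize hk : Nat.find h = k at hr
    cases hr with
    | refl _ => exact absurd (hB _ hb) hy
    | @cons n _ z _ hm ha hr =>
      exact ⟨z, ha, fun n' hn' => ⟨n, by have := Nat.find_min' h hn'; omega, b, hb, hr⟩⟩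
  have hch : ∀ y, ∃ z, (¬ Γ.Terminal y → (∃ n, d y n) →
      Γ.adj y z ∧ ∀ n, d y n → ∃ m < n, d z m) := by
    intro y
    by_cases h : ¬ Γ.Terminal y ∧ ∃ n, d y n
    · obtain ⟨z, hz⟩ := hnext y h.1 h.2
      exact ⟨z, fun _ _ => hz⟩
    · exact ⟨y, fun h1 h2 => absurd ⟨h1, h2⟩ h⟩
  choose ρ hρ using hch
  let σ : V → V := fun y => if ¬ Γ.Visits τ i y ∧ ∃ n, d y n then ρ y else τ y
  have hσv : ∀ y, Γ.Visits τ i y → σ y = τ y := fun y hy => if_neg fun h => h.1 hy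
  refine ⟨σ, ?_, hσv, ?_, ?_⟩
  · intro y hy
    by_cases h : ¬ Γ.Visits τ i y ∧ ∃ n, d y n
    · simp only [σ, if_pos h]
      exact (hρ y hy h.2).1
    · simp only [σ, if_neg h]
      exact hτ y hy
  · intro y hy
    refine if_neg fun h => hy ?_
    obtain ⟨-, n, b, hb, hr⟩ := h
    exact ⟨b, hb, n, hr⟩
  · rintro y ⟨b, hb, n, hr⟩
    have key : ∀ n y, d y n → ∃ b ∈ B, Γ.Leads W σ y b := by
      intro n
      induction n using Nat.strong_induction_on with
      | _ n ih =>
        intro y hd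
        have hyW : y ∈ W := by
          obtain ⟨b, _, hr⟩ := hd
          exact hr.mem
        by_cases hv : Γ.Visits τ i y
        · exact ⟨a, haB, (hl.visits hv).congr fun u hu _ => hσv u (hv.trans hu)⟩
        by_cases hy : Γ.Terminal y
        · obtain ⟨b, hb, hr⟩ := hd
          cases hr with
          | refl hm => exact ⟨y, hb, .term hy hm⟩
          | cons _ ha _ => exact absurd ha (hy _)
        · obtain ⟨m, hmn, hm⟩ := (hρ y hy ⟨n, hd⟩).2 n hd
          obtain ⟨b, hb, h⟩ := ih m hmn _ hm
          refine ⟨b, hb, .move hyW hy ?_⟩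
          have : σ y = ρ y := if_pos ⟨hv, n, hd⟩
          rwa [this]
    exact key n y ⟨b, hb, hr⟩

/-! ### Stable situations -/

lemma exists_situation (Γ : DGGame V ι) : ∃ σ, Γ.IsSituation σ := by
  have : ∀ y, ∃ z, ¬ Γ.Terminal y → Γ.adj y z := by
    intro y
    by_cases h : Γ.Terminal y
    · exact ⟨y, fun h' => absurd h h'⟩
    · obtain ⟨z, hz⟩ := _root_.not_forall_not.1 h
      exact ⟨z, fun _ => hz⟩
  choose σ hσ using this
  exact ⟨σ, hσ⟩

/-- The induction step: `B` is the set of targets, `τ` is stable for the child `i`. -/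
lemma stable_step {W : Set V} {x i a : V} {τ : V → V} (hpref : Γ.PrefOrder)
    (hxW : x ∈ W) (hx : ¬ Γ.Terminal x) (hxi : Γ.adj x i)
    (hτ : Γ.Stable (W \ {x}) i τ a) (B : Set V) (hB : ∀ b ∈ B, Γ.Terminal b) (haB : a ∈ B)
    (hBi : ∀ b ∈ B, (∃ n, Γ.ReachIn (W \ {x}) n i b) → b = a)
    (hBx : ∀ b ∈ B, ¬ Γ.pref (Γ.owner x) (some b) (some a))
    (hall : ∀ j, Γ.adj x j → ∀ t n, Γ.Terminal t → Γ.ReachIn (W \ {x}) n j t →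
      ∃ b ∈ B, ∃ m, Γ.ReachIn (W \ {x}) m j b) :
    ∃ σ, Γ.Stable W x σ a := by
  obtain ⟨ρ, hρsit, hρv, hρo, hρB⟩ := exists_redirect hτ.sit hτ.leads B hB haB
  let σ : V → V := Function.update ρ x i
  have hσx : σ x = i := Function.update_self ..
  have hσne : ∀ y, y ≠ x → σ y = ρ y := fun y hy => Function.update_of_ne hy ..
  have hsit : Γ.IsSituation σ := by
    intro y hy
    by_cases h : y = x
    · subst h
      rwa [hσx]
    · rw [hσne y h]
      exact hρsit y hy
  -- Plays of `ρ` inside `W \ {x}` are plays of `σ`.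
  have hρσ : ∀ y b, Γ.Leads (W \ {x}) ρ y b → Γ.Leads (W \ {x}) σ y b := by
    intro y b h
    exact h.congr fun u hu _ => hσne u (h.visits hu).mem.2
  have hστ : ∀ u, Γ.Visits τ i u → ¬ Γ.Terminal u → σ u = τ u := by
    intro u hu _
    rw [hσne u (hτ.leads.visits hu).mem.2, hρv u hu]
  have hli : Γ.Leads (W \ {x}) σ i a := hτ.leads.congr hστ
  refine ⟨σ, hsit, .move hxW hx ?_, ?_⟩
  · rw [hσx]
    exact hli.mono Set.sdiff_subset
  intro u hu hut w huw b hb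
  have hcases : u = x ∨ Γ.Visits σ i u := by
    rcases Relation.ReflTransGen.cases_head hu with h | ⟨c, ⟨_, rfl⟩, h⟩
    · exact .inl h.symm
    · rw [hσx] at h
      exact .inr h
  rcases hcases with rfl | hiu
  · obtain ⟨n, hn⟩ := hb.reachIn hsit
    obtain ⟨b', hb', h⟩ := hρB w (hall w huw b n hb.terminal hn)
    rw [hb.unique (hρσ _ _ h)]
    exact hBx b' hb'
  · have hτu : Γ.Visits τ i u := hiu.congr hστ
    -- A deviating play through `x` would return to `u`.
    have hnx : ∀ b, ¬ Γ.Leads (W \ {u}) σ x b := by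
      intro b h
      have h1 := h.next hx
      rw [hσx] at h1
      exact (h1.visits hiu).mem.2 rfl
    by_cases hwB : ∃ b ∈ B, ∃ n, Γ.ReachIn (W \ {x}) n w b
    · obtain ⟨b', hb', h⟩ := hρB w hwB
      have h := hρσ _ _ h
      have hbb : b = b' := hb.unique h
      obtain ⟨n, hn⟩ := Visits.reachIn hτ.sit hτ.leads hτu
      obtain ⟨m, hm⟩ := h.reachIn hsit
      have hiu' : Γ.ReachIn (W \ {x}) (m + 1) u b' :=
        .cons (hτ.leads.visits hτu).mem huw hm
      have hba : b' = a := hBi b' hb' (hn.trans hiu')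
      rw [hbb, hba]
      exact (hpref _).1 _ (.inr ⟨a, hτ.leads.terminal, rfl⟩)
    · refine hτ.noGain u hτu hut w huw b ?_
      clear huw
      induction hb with
      | term ht hm =>
        refine .term ht ⟨⟨hm.1, ?_⟩, hm.2⟩
        rintro rfl
        exact hx ht
      | @move y t hm hy hl ih =>
        have hyx : y ≠ x := by
          rintro rfl
          exact hnx _ (.move hm hy hl)
        have hσy : σ y = τ y := by rw [hσne y hyx, hρo y hwB]
        refine .move ⟨⟨hm.1, hyx⟩, hm.2⟩ hy ?_
        rw [← hσy]
        refine ih ?_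
        rintro ⟨b, hb, n, hr⟩
        exact hwB ⟨b, hb, n + 1, .cons ⟨hm.1, hyx⟩ (hsit y hy) hr⟩

lemma exists_stable [Finite V] (hpref : Γ.PrefOrder) (N : ℕ) :
    ∀ (W : Set V), W.ncard ≤ N → ∀ x t n, Γ.Terminal t → Γ.ReachIn W n x t →
      ∃ a σ, Γ.Stable W x σ a := by
  have : Fintype V := Fintype.ofFinite V
  induction N with
  | zero =>
    intro W hW x t n _ hr
    have : W = ∅ := (Set.ncard_eq_zero).1 (Nat.le_zero.1 hW)
    exact absurd hr.mem (by simp [this])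
  | succ N ih =>
    intro W hW x t n ht hr
    by_cases hx : Γ.Terminal x
    · obtain ⟨σ, hσ⟩ := Γ.exists_situation
      refine ⟨x, σ, hσ, .term hx hr.mem, ?_⟩
      intro u hu hut
      rcases Relation.ReflTransGen.cases_head hu with rfl | ⟨c, ⟨h, _⟩, _⟩
      · exact absurd hx hut
      · exact absurd hx h
    have hcard : (W \ {x}).ncard ≤ N := by
      have := Set.ncard_sdiff_singleton_lt_of_mem hr.mem
      omega
    let I := {j : V // Γ.adj x j ∧ ∃ t n, Γ.Terminal t ∧ Γ.ReachIn (W \ {x}) n j t}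
    have hI : ∀ j : I, ∃ a σ, Γ.Stable (W \ {x}) j σ a := by
      rintro ⟨j, _, t, n, ht, h⟩
      exact ih _ hcard j t n ht h
    choose a σ hσ using hI
    have hne : Nonempty I := by
      rcases hr.avoid (x := x) (fun h => hx (h ▸ ht)) with ⟨m, h⟩ | ⟨w, m, hw, h⟩
      · exact absurd rfl h.mem.2
      · exact ⟨w, hw, t, m, ht, h⟩
    have hout : ∀ i, some (a i) ∈ Γ.OutcomeSet :=
      fun i => .inr ⟨a i, (hσ i).leads.terminal, rfl⟩
    obtain ⟨i, -, hi⟩ := exists_selection a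
      (fun j b => ∃ n, Γ.ReachIn (W \ {x}) n j b)
      (fun b c => Γ.pref (Γ.owner x) (some b) (some c))
      (fun j => (hσ j).leads.reachIn (hσ j).sit)
      (fun j => (hpref _).1 _ (hout j))
      (fun j k l => (hpref _).2.1 _ (hout j) _ (hout k) _ (hout l))
      (Finset.univ : Finset I) Finset.univ_nonempty
    refine ⟨a i, stable_step hpref hr.mem hx i.2.1 (hσ i)
      {b | Γ.Terminal b ∧ ¬ Γ.pref (Γ.owner x) (some b) (some (a i)) ∧
        (b = a i ∨ ¬ ∃ n, Γ.ReachIn (W \ {x}) n i b)}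
      (fun b hb => hb.1)
      ⟨(hσ i).leads.terminal, (hpref _).1 _ (hout i), .inl rfl⟩
      (fun b hb h => hb.2.2.resolve_right fun h' => h' h)
      (fun b hb => hb.2.1) ?_⟩
    intro j hj t n ht hr
    obtain ⟨l, -, h1, h2, h3⟩ := hi ⟨j, hj, t, n, ht, hr⟩ (Finset.mem_univ _)
    exact ⟨a l, ⟨(hσ l).leads.terminal, h2, h3⟩, h1⟩

/-! ### From stable situations to Nash equilibria -/

lemma leads_of_iterate {σ : V → V} (n : ℕ) : ∀ y, Γ.Terminal ((Γ.step σ)^[n] y) →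
    Γ.Leads Set.univ σ y ((Γ.step σ)^[n] y) := by
  induction n with
  | zero => exact fun y hy => .term hy trivial
  | succ n ih =>
    intro y hy
    rw [Function.iterate_succ_apply] at hy ⊢
    have h := ih _ hy
    by_cases ht : Γ.Terminal y
    · rwa [show Γ.step σ y = y from if_pos ht] at h ⊢
    · rw [show Γ.step σ y = σ y from if_neg ht] at h ⊢
      exact .move trivial ht h

lemma Leads.iterate {W : Set V} {σ : V → V} {y t : V} (h : Γ.Leads W σ y t) :
    ∃ n, (Γ.step σ)^[n] y = t := by
  induction h with
  | term _ _ => exact ⟨0, rfl⟩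
  | @move y t _ hy _ ih =>
    obtain ⟨n, hn⟩ := ih
    refine ⟨n + 1, ?_⟩
    rw [Function.iterate_succ_apply, show Γ.step σ y = σ y from if_neg hy, hn]

lemma leads_of_outcome {σ : V → V} {b : V} (h : Γ.outcome σ = some b) :
    Γ.Leads Set.univ σ Γ.init b := by
  unfold outcome at h
  split_ifs at h with hex
  rw [← Option.some.inj h]
  exact leads_of_iterate _ _ (Nat.find_spec hex)

lemma Leads.outcome {σ : V → V} {b : V} (h : Γ.Leads Set.univ σ Γ.init b) :
    Γ.outcome σ = some b := by
  obtain ⟨n, hn⟩ := h.iterate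
  have hex : ∃ n, Γ.Terminal (Γ.iter σ n) := ⟨n, by
    rw [iter, hn]
    exact h.terminal⟩
  have ho : Γ.outcome σ = some (Γ.iter σ (Nat.find hex)) := dif_pos hex
  rw [ho, (leads_of_outcome ho).unique h]

lemma Stable.isNE {σ : V → V} {a : V} (h : Γ.Stable Set.univ Γ.init σ a)
    (hpref : Γ.PrefOrder) (hterm : Γ.TerminalGame) (hpo : Γ.PlayOnce) : Γ.IsNE σ := by
  refine ⟨h.sit, fun i σ' hσ' heq hp => ?_⟩
  have ha : some a ∈ Γ.OutcomeSet := .inr ⟨a, h.leads.terminal, rfl⟩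
  have hnone : none ∈ Γ.OutcomeSet := .inl rfl
  obtain ⟨u, hu⟩ := Set.ncard_eq_one.1 (hpo i)
  have hui : ¬ Γ.Terminal u ∧ Γ.owner u = i := by
    have : u ∈ ({u} : Set V) := rfl
    rwa [← hu] at this
  have hne : ∀ y, ¬ Γ.Terminal y → y ≠ u → σ' y = σ y := by
    intro y hy hyu
    refine heq y fun ho => hyu ?_
    have : y ∈ {x | ¬ Γ.Terminal x ∧ Γ.owner x = i} := ⟨hy, ho⟩
    rwa [hu] at this
  rw [h.leads.outcome] at hp
  by_cases hv : Γ.Visits σ Γ.init u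
  · cases hb : Γ.outcome σ' with
    | none =>
      rw [hb] at hp
      exact (hpref i).1 _ hnone
        ((hpref i).2.1 _ hnone _ ha _ hnone hp (hterm i a h.leads.terminal))
    | some b =>
      rw [hb] at hp
      have hl := leads_of_outcome hb
      have hlu : Γ.Leads Set.univ σ' u b := by
        generalize Γ.init = y at hv hl
        induction hv using Relation.ReflTransGen.head_induction_on with
        | refl => exact hl
        | @head y c hs _ ih =>
          by_cases hyu : y = u
          · rwa [hyu] at hl
          obtain ⟨hn, rfl⟩ := hs
          have := hl.next hn
          rw [hne y hn hyu] at this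
          exact ih this
      have hav : Γ.Leads (Set.univ \ {u}) σ' (σ' u) b :=
        (hlu.avoid hui.1).resolve_left fun h' => h'.mem.2 rfl
      have hav' : Γ.Leads (Set.univ \ {u}) σ (σ' u) b :=
        hav.congr fun y hy hyt => (hne y hyt (hav.visits hy).mem.2).symm
      have := h.noGain u hv hui.1 _ (hσ' u hui.1) b hav'
      rw [hui.2] at this
      exact this hp
  · have : Γ.Leads Set.univ σ' Γ.init a := h.leads.congr fun y hy hyt =>
      hne y hyt fun hyu => hv (hyu ▸ hy)
    rw [this.outcome] at hp
    exact (hpref i).1 _ ha hp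

end DGGame

/-- Every DG game that is both terminal and play-once has a Nash equilibrium
(in pure stationary strategies). -/
theorem stmt4 {V ι : Type*} [Finite V] (Γ : DGGame V ι)
    (hinit : ¬ Γ.Terminal Γ.init) (hpref : Γ.PrefOrder)
    (hterm : Γ.TerminalGame) (hpo : Γ.PlayOnce) :
    ∃ σ : V → V, Γ.IsNE σ := by
  by_cases hr : ∃ t n, Γ.Terminal t ∧ Γ.ReachIn Set.univ n Γ.init t
  · obtain ⟨t, n, ht, hr⟩ := hr
    obtain ⟨a, σ, h⟩ := DGGame.exists_stable hpref _ Set.univ le_rfl _ t n ht hr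
    exact ⟨σ, h.isNE hpref hterm hpo⟩
  · -- No terminal can be reached, so every situation has outcome `∞`.
    have hinf : ∀ σ, Γ.IsSituation σ → Γ.outcome σ = none := by
      intro σ hσ
      cases hb : Γ.outcome σ with
      | none => rfl
      | some b =>
        have hl := DGGame.leads_of_outcome hb
        obtain ⟨n, hn⟩ := hl.reachIn hσ
        exact absurd ⟨b, n, hl.terminal, hn⟩ hr
    obtain ⟨σ, hσ⟩ := Γ.exists_situation
    refine ⟨σ, hσ, fun i σ' hσ' _ => ?_⟩
    rw [hinf σ hσ, hinf σ' hσ']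
    exact (hpref i).1 _ (.inl rfl)
end
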